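/- arXiv:2509.05055 — 2 statements merged into one kernel-verified Lean document; each statement's English description precedes it below -/
import Mathlib

section
/- There exists an absolute constant C > 0 such that for every integer d ≥ 1, the oriented hypercube Q⃗_d satisfies r⃗(Q⃗_d) ≤ C · d³ · 17^d. -/
/-- A tournament: a digraph in which every pair of distinct vertices is joined
by an edge in exactly one direction, and there are no loops. -/
def Digraph.IsTournament {V : Type*} (T : Digraph V) : Prop :=
  (∀ v : V, ¬ T.Adj v v) ∧ ∀ u v : V, u ≠ v → (T.Adj u v ↔ ¬ T.Adj v u)

/-- `T` contains a copy of `G`: an injective map preserving directed edges. -/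
def Digraph.ContainsCopy {V W : Type*} (T : Digraph W) (G : Digraph V) : Prop :=
  ∃ φ : V → W, Function.Injective φ ∧ ∀ u v : V, G.Adj u v → T.Adj (φ u) (φ v)

/-- The oriented Ramsey number of `G`: the least `N` such that every tournament on `N`
vertices contains a copy of `G`. -/
noncomputable def orientedRamsey {V : Type*} (G : Digraph V) : ℕ :=
  sInf {N : ℕ | ∀ T : Digraph (Fin N), T.IsTournament → T.ContainsCopy G}

/-- The oriented hypercube `Q⃗_d` on vertex set `{0,1}^d`: there is an edge from `u` to `v`
iff `v` differs from `u` in exactly one coordinate, which is `0` in `u` and `1` in `v`. -/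
def hypercubeDigraph (d : ℕ) : Digraph (Fin d → Bool) where
  Adj u v := ∃ i : Fin d, u i = false ∧ v i = true ∧ ∀ j : Fin d, j ≠ i → v j = u j

/-!
A median order puts the tournament on a line so that at least half of every interval is joined to
the right end of the interval. Cut this line into blocks of length `L = 2 ^ 20 * d * 17 ^ d`. For a
subset `S` of a block, one of the `2 * d` blocks before it sends nearly half of all possible edges
to `S`, and dependent random choice finds in that block a large set `U` of which few `q`-tuples have
a small common out-neighbourhood in `S`. Going from right to left one obtains disjoint sets
`V 0, …, V d`, where `V k` is meant to contain the cube vertices with `k` ones.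

The cube is then embedded level by level from left to right, each vertex being chosen greedily in
the common out-neighbourhood of its lower neighbours. A random such choice is expected to complete
fewer than one bad tuple, so some choice leaves enough candidates for every vertex of the next
level. Since `V q` has density about `4 ^ (-q)` in its block and the square of this density is lost,
what is needed is that `L` dominates `d.choose q * 16 ^ q`, which is at most `(16 + 1) ^ d` by the
binomial theorem.
-/

namespace OrientedRamsey

open Finset

theorem exists_chain_succ {σ : Type*} {P : ℕ → σ → Prop} {Q : ℕ → σ → σ → Prop} {d : ℕ}
    (hbase : ∃ s, P 0 s) (hstep : ∀ k < d, ∀ s, P k s → ∃ s', P (k + 1) s' ∧ Q k s s') :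
    ∃ f : ℕ → σ, (∀ k ≤ d, P k (f k)) ∧ ∀ k < d, Q k (f k) (f (k + 1)) := by
  induction d with
  | zero =>
    obtain ⟨s, hs⟩ := hbase
    exact ⟨fun _ ↦ s, fun k hk ↦ by rwa [Nat.le_zero.1 hk], fun k hk ↦ absurd hk k.not_lt_zero⟩
  | succ d ih =>
    obtain ⟨f, hP, hQ⟩ := ih fun k hk ↦ hstep k (hk.trans d.lt_succ_self)
    obtain ⟨s, hPs, hQs⟩ := hstep d d.lt_succ_self (f d) (hP d le_rfl)
    refine ⟨Function.update f (d + 1) s, fun k hk ↦ ?_, fun k hk ↦ ?_⟩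
    · rcases hk.lt_or_eq with hk | rfl
      · rw [Function.update_of_ne hk.ne]
        exact hP k (Nat.lt_succ_iff.1 hk)
      · rwa [Function.update_self]
    · rw [Function.update_of_ne hk.ne]
      rcases (Nat.lt_succ_iff.1 hk).lt_or_eq with hk | rfl
      · rw [Function.update_of_ne (by lia)]
        exact hQ k hk
      · rwa [Function.update_self]

theorem exists_chain_pred {σ : Type*} {P : ℕ → σ → Prop} {Q : ℕ → σ → σ → Prop} {d : ℕ}
    (hbase : ∃ s, P d s) (hstep : ∀ k < d, ∀ s, P (k + 1) s → ∃ s', P k s' ∧ Q k s' s) :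
    ∃ f : ℕ → σ, (∀ k ≤ d, P k (f k)) ∧ ∀ k < d, Q k (f k) (f (k + 1)) := by
  obtain ⟨f, hP, hQ⟩ := exists_chain_succ (d := d) (P := fun k ↦ P (d - k))
    (Q := fun k s s' ↦ Q (d - (k + 1)) s' s) hbase fun k hk s hs ↦
      hstep (d - (k + 1)) (by lia) s (by rwa [show d - (k + 1) + 1 = d - k by lia])
  refine ⟨fun k ↦ f (d - k), fun k hk ↦ ?_, fun k hk ↦ ?_⟩
  · simpa only [Nat.sub_sub_self hk] using hP (d - k) (d.sub_le k)
  · simpa only [show d - (k + 1) + 1 = d - k by lia, Nat.sub_sub_self hk.le]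
      using hQ (d - (k + 1)) (by lia)

section MedianOrder

variable {V : Type*} (R : V → V → Prop) [∀ a b, Decidable (R a b)]

/-- The number of edges of `R` that point from an earlier to a later position of a list. A list of
all vertices of a tournament that maximizes it is a *median order*. -/
def forwardEdges : List V → ℕ
  | [] => 0
  | x :: l => l.countP (fun y ↦ R x y) + forwardEdges l

theorem forwardEdges_append_add_of_perm (A : List V) {X Y : List V} (h : X.Perm Y) :
    forwardEdges R (A ++ X) + forwardEdges R Y = forwardEdges R (A ++ Y) + forwardEdges R X := by
  induction A with
  | nil => exact add_comm _ _
  | cons a A ih =>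
    have hcount := (h.append_left A).countP_eq fun y ↦ decide (R a y)
    simp only [List.cons_append, forwardEdges]
    lia

theorem forwardEdges_append_cons (B C : List V) (v : V) :
    forwardEdges R (B ++ v :: C) + B.countP (fun b ↦ R v b) =
      forwardEdges R (v :: (B ++ C)) + B.countP (fun b ↦ R b v) := by
  induction B with
  | nil => simp
  | cons b B ih =>
    simp only [List.cons_append, forwardEdges, List.countP_cons, List.countP_append] at ih ⊢
    lia

/-- The numbering `0, …, N - 1` of the vertices is a *median order* of `R`, in the local sense that
at least half of any interval `[i, j)` is joined to its right end `j`. -/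
def IsMedianOrder (R : ℕ → ℕ → Prop) [∀ a b, Decidable (R a b)] (N : ℕ) : Prop :=
  ∀ ⦃i j : ℕ⦄, j < N → j - i ≤ 2 * #{x ∈ Ico i j | R x j}

theorem isMedianOrder_of_forall_list {N : ℕ} {σ : ℕ → V}
    (h : ∀ A B C v, (List.range N).map σ = A ++ (B ++ v :: C) →
      B.length ≤ 2 * B.countP (fun b ↦ R b v)) :
    IsMedianOrder (fun x y ↦ R (σ x) (σ y)) N := by
  intro i j hj
  rcases le_total j i with hji | hij
  · simp [hji]
  have hsplit : (List.range N).map σ = (List.Ico 0 i).map σ ++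
      ((List.Ico i j).map σ ++ σ j :: (List.Ico (j + 1) N).map σ) := by
    rw [← List.map_cons, ← List.map_append, ← List.map_append, ← List.Ico.eq_cons hj,
      List.Ico.append_consecutive hij hj.le,
      List.Ico.append_consecutive i.zero_le (hij.trans hj.le), List.Ico.zero_bot]
  have hmed := h _ _ _ _ hsplit
  rwa [List.length_map, List.Ico.length, List.countP_map, List.countP_eq_length_filter] at hmed

theorem length_eq_countP_adj_add_countP_adj {T : Digraph V} [∀ a b, Decidable (T.Adj a b)]
    (hT : T.IsTournament) {B : List V} {v : V} (hv : v ∉ B) :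
    B.length = B.countP (fun b ↦ T.Adj b v) + B.countP (fun b ↦ T.Adj v b) := by
  rw [List.length_eq_countP_add_countP fun b ↦ decide (T.Adj b v)]
  congr 1
  refine List.countP_congr fun b hb ↦ ?_
  simp [hT.2 v b (ne_of_mem_of_not_mem hb hv).symm]

theorem exists_isMedianOrder [Fintype V] [Nonempty V] {T : Digraph V}
    [∀ a b, Decidable (T.Adj a b)] (hT : T.IsTournament) :
    ∃ σ : ℕ → V, Set.InjOn σ (Set.Iio (Fintype.card V)) ∧
      IsMedianOrder (fun x y ↦ T.Adj (σ x) (σ y)) (Fintype.card V) := by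
  classical
  obtain ⟨l, hl, hmax⟩ := exists_max_image (univ : Finset V).toList.permutations.toFinset
    (forwardEdges T.Adj) ⟨univ.toList, by simp⟩
  have hperm : l.Perm univ.toList := by simpa using hl
  have hlen : l.length = Fintype.card V := by rw [hperm.length_eq, length_toList, card_univ]
  have hnodup : l.Nodup := hperm.nodup_iff.2 (nodup_toList _)
  set σ : ℕ → V := fun i ↦ l.getD i (Classical.arbitrary V) with hσ
  have hlσ : (List.range (Fintype.card V)).map σ = l :=
    List.ext_getElem (by simp [hlen]) fun i _ hi ↦ by simp [hσ, hi]
  refine ⟨σ, fun a ha b hb ↦ ?_, isMedianOrder_of_forall_list T.Adj fun A B C v h ↦ ?_⟩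
  · rw [← hlσ] at hnodup
    exact List.inj_on_of_nodup_map hnodup (by simpa using ha) (by simpa using hb)
  rw [hlσ] at h
  -- Moving `v` in front of `B` does not increase the number of forward edges.
  have hmove : (B ++ v :: C).Perm (v :: (B ++ C)) := List.perm_middle
  have hle := hmax (A ++ v :: (B ++ C)) <| by
    simpa using (hmove.symm.append_left A).trans (h ▸ hperm)
  have hvB : v ∉ B := by
    rw [h, List.nodup_append, List.nodup_middle, List.nodup_cons, List.mem_append] at hnodup
    exact fun hv ↦ hnodup.2.1.1 (Or.inl hv)
  rw [h] at hle
  have := forwardEdges_append_add_of_perm T.Adj A hmove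
  have := forwardEdges_append_cons T.Adj B C v
  have := length_eq_countP_adj_add_countP_adj hT hvB
  lia

end MedianOrder

section Blocks

/-- The `n`-th interval of length `L` in `ℕ`. -/
def block (L n : ℕ) : Finset ℕ := Ico (n * L) ((n + 1) * L)

theorem card_block (L n : ℕ) : #(block L n) = L := by
  rw [block, Nat.card_Ico, ← Nat.sub_mul, Nat.add_sub_cancel_left, one_mul]

theorem disjoint_block (L : ℕ) {m n : ℕ} (h : m ≠ n) : Disjoint (block L m) (block L n) := by
  rw [disjoint_left]
  intro x hm hn
  simp only [block, mem_Ico] at hm hn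
  have hmn := Nat.lt_of_mul_lt_mul_right (hm.1.trans_lt hn.2)
  have hnm := Nat.lt_of_mul_lt_mul_right (hn.1.trans_lt hm.2)
  lia

theorem sum_Ico_sum_block {M : Type*} [AddCommMonoid M] (f : ℕ → M) (L : ℕ) {m n : ℕ}
    (h : m ≤ n) : ∑ i ∈ Ico m n, ∑ x ∈ block L i, f x = ∑ x ∈ Ico (m * L) (n * L), f x := by
  induction n, h using Nat.le_induction with
  | base => simp
  | succ n hmn ih =>
    rw [sum_Ico_succ_top hmn, ih, block, sum_Ico_consecutive f (by gcongr) (by gcongr; lia)]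

variable {R : ℕ → ℕ → Prop} [∀ a b, Decidable (R a b)] {N L : ℕ}

theorem IsMedianOrder.mul_card_le_sum_bipartiteAbove (hR : IsMedianOrder R N) {r n : ℕ}
    (hr : r ≤ n) (hn : (n + 1) * L ≤ N) {S : Finset ℕ} (hS : S ⊆ block L n) :
    r * L * #S ≤ 2 * ∑ w ∈ Ico ((n - r) * L) (n * L), #(S.bipartiteAbove R w) + L * #S := by
  have hvertex : ∀ s ∈ S,
      r * L ≤ 2 * #((Ico ((n - r) * L) (n * L)).bipartiteBelow R s) + L := by
    intro s hs
    obtain ⟨hns, hsn⟩ := mem_Ico.1 (hS hs)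
    have hmed : s - (n - r) * L ≤ 2 * #{x ∈ Ico ((n - r) * L) s | R x s} := hR (by lia)
    have hsub : #{x ∈ Ico ((n - r) * L) s | R x s} ≤
        #{x ∈ Ico ((n - r) * L) (n * L) | R x s} + (s - n * L) := by
      rw [← Ico_union_Ico_eq_Ico (Nat.mul_le_mul_right L (n.sub_le r)) hns, filter_union]
      grw [card_union_le, card_filter_le (Ico (n * L) s), Nat.card_Ico]
    rw [add_mul, one_mul] at hsn
    have hrL : (n - r) * L + r * L = n * L := by rw [← add_mul, Nat.sub_add_cancel hr]
    simp only [bipartiteBelow]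
    lia
  calc r * L * #S = #S • (r * L) := by rw [smul_eq_mul, mul_comm]
    _ ≤ ∑ s ∈ S, (2 * #((Ico ((n - r) * L) (n * L)).bipartiteBelow R s) + L) :=
      card_nsmul_le_sum _ _ _ hvertex
    _ = _ := by
      rw [sum_add_distrib, ← mul_sum, ← sum_card_bipartiteAbove_eq_sum_card_bipartiteBelow,
        sum_const, smul_eq_mul, mul_comm L]

theorem IsMedianOrder.exists_dense_block (hR : IsMedianOrder R N) {r n : ℕ} (hr : 0 < r)
    (hrn : r ≤ n) (hn : (n + 1) * L ≤ N) {S : Finset ℕ} (hS : S ⊆ block L n) :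
    ∃ m, m < n ∧ n ≤ m + r ∧
      (1 - 1 / r) / 2 * L * #S ≤ (∑ w ∈ block L m, #(S.bipartiteAbove R w) : ℝ) := by
  have htotal := hR.mul_card_le_sum_bipartiteAbove hrn hn hS
  rw [← sum_Ico_sum_block _ L (n.sub_le r)] at htotal
  obtain ⟨m, hm, hle⟩ := exists_le_of_sum_le (s := Ico (n - r) n)
    (f := fun _ ↦ (1 - 1 / r) / 2 * L * (#S : ℝ))
    (g := fun m ↦ (∑ w ∈ block L m, #(S.bipartiteAbove R w) : ℝ)) (nonempty_Ico.2 (by lia)) <| by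
      rw [sum_const, Nat.card_Ico, Nat.sub_sub_self hrn, nsmul_eq_mul]
      have hr' : (r : ℝ) ≠ 0 := mod_cast hr.ne'
      have htotal' : (r * L * #S : ℝ) ≤ 2 * ∑ m ∈ Ico (n - r) n,
        ∑ w ∈ block L m, (#(S.bipartiteAbove R w) : ℝ) + L * #S := mod_cast htotal
      calc (r : ℝ) * ((1 - 1 / r) / 2 * L * #S) = (r * L * #S - L * #S) / 2 := by field_simp
        _ ≤ _ := by linarith
  exact ⟨m, (mem_Ico.1 hm).2, by have := (mem_Ico.1 hm).1; lia, hle⟩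

end Blocks

section DependentRandomChoice

variable {α β ι κ : Type*} [Fintype ι] [Fintype κ] (R : α → β → Prop) [∀ a b, Decidable (R a b)]

/-- The common out-neighbourhood in `S` of the entries of the tuple `τ`. -/
def commonOut (S : Finset β) (τ : ι → α) : Finset β := {v ∈ S | ∀ i, R (τ i) v}

/-- The common in-neighbourhood in `W` of the entries of the tuple `σ`. -/
def commonIn (W : Finset α) (σ : κ → β) : Finset α := {w ∈ W | ∀ j, R w (σ j)}

variable (ι) in
/-- The tuples of elements of `U`, indexed by `ι`, whose entries have fewer than `h` common
out-neighbours in `S`. Dependent random choice produces large sets `U` with few bad tuples. -/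
def badTuples [DecidableEq ι] (h : ℕ) (U : Finset α) (S : Finset β) : Finset (ι → α) :=
  {τ ∈ Fintype.piFinset fun _ ↦ U | #(commonOut R S τ) < h}

theorem commonIn_subset (W : Finset α) (σ : κ → β) : commonIn R W σ ⊆ W := filter_subset _ _

theorem commonOut_comp_equiv (S : Finset β) (τ : ι → α) (e : κ ≃ ι) :
    commonOut R S (τ ∘ e) = commonOut R S τ :=
  filter_congr fun v _ ↦ e.forall_congr_left.trans (by simp)

theorem card_badTuples_congr [DecidableEq ι] [DecidableEq κ] (e : ι ≃ κ) (h : ℕ) (U : Finset α)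
    (S : Finset β) : #(badTuples ι R h U S) = #(badTuples κ R h U S) := by
  refine card_equiv (e.arrowCongr (Equiv.refl α)) fun τ ↦ ?_
  simp only [badTuples, mem_filter, Fintype.mem_piFinset, Equiv.arrowCongr_apply, Equiv.coe_refl,
    Function.id_comp]
  rw [show commonOut R S (e.arrowCongr (Equiv.refl α) τ) = commonOut R S τ from
    commonOut_comp_equiv R S τ e.symm]
  exact and_congr_left' (e.symm.forall_congr_right (q := fun i ↦ τ i ∈ U)).symm

theorem card_filter_piFinset_const_forall [DecidableEq κ] (S : Finset β) (p : β → Prop)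
    [DecidablePred p] :
    #{σ ∈ Fintype.piFinset fun _ : κ ↦ S | ∀ j, p (σ j)} = #{s ∈ S | p s} ^ Fintype.card κ := by
  rw [← card_univ, ← prod_const, ← Fintype.card_piFinset]
  congr 1
  ext σ
  simp [forall_and]

theorem sum_card_commonIn [DecidableEq κ] (W : Finset α) (S : Finset β) :
    ∑ σ ∈ Fintype.piFinset fun _ : κ ↦ S, #(commonIn R W σ) =
      ∑ w ∈ W, #(S.bipartiteAbove R w) ^ Fintype.card κ := by
  refine (sum_card_bipartiteAbove_eq_sum_card_bipartiteBelow fun w (σ : κ → β) ↦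
    ∀ j, R w (σ j)).symm.trans (sum_congr rfl fun w _ ↦ ?_)
  exact card_filter_piFinset_const_forall S (R w)

theorem pow_mul_card_le_sum_card_pow {δ : ℝ} (hδ : 0 ≤ δ) {W : Finset α} {S : Finset β}
    (hdense : δ * #W * #S ≤ ∑ w ∈ W, (#(S.bipartiteAbove R w) : ℝ)) (t : ℕ) :
    (#S : ℝ) ^ t * (δ ^ t * #W) ≤ ∑ w ∈ W, (#(S.bipartiteAbove R w) : ℝ) ^ t := by
  rcases W.eq_empty_or_nonempty with rfl | hW
  · simp
  have hW' : (0 : ℝ) < #W := mod_cast hW.card_pos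
  have hmean := Real.pow_arith_mean_le_arith_mean_pow W (fun _ ↦ (#W : ℝ)⁻¹)
    (fun w ↦ (#(S.bipartiteAbove R w) : ℝ)) (fun _ _ ↦ by positivity)
    (by rw [sum_const, nsmul_eq_mul, mul_inv_cancel₀ hW'.ne']) (fun _ _ ↦ by positivity) t
  rw [← mul_sum, ← mul_sum] at hmean
  calc (#S : ℝ) ^ t * (δ ^ t * #W) = #W * ((#W : ℝ)⁻¹ * (δ * #W * #S)) ^ t := by
        rw [show (#W : ℝ)⁻¹ * (δ * #W * #S) = δ * #S by field_simp, mul_pow]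
        ring
    _ ≤ #W * ((#W : ℝ)⁻¹ * ∑ w ∈ W, (#(S.bipartiteAbove R w) : ℝ)) ^ t := by gcongr
    _ ≤ #W * ((#W : ℝ)⁻¹ * ∑ w ∈ W, (#(S.bipartiteAbove R w) : ℝ) ^ t) := by gcongr
    _ = _ := by rw [mul_inv_cancel_left₀ hW'.ne']

theorem sum_card_badTuples_commonIn_le [DecidableEq ι] [DecidableEq κ] (h : ℕ) (W : Finset α)
    (S : Finset β) :
    ∑ σ ∈ Fintype.piFinset fun _ : κ ↦ S, #(badTuples ι R h (commonIn R W σ) S) ≤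
      #W ^ Fintype.card ι * h ^ Fintype.card κ := by
  have hbad : ∀ σ : κ → β, badTuples ι R h (commonIn R W σ) S =
      (badTuples ι R h W S).bipartiteBelow (fun τ σ ↦ ∀ j i, R (τ i) (σ j)) σ := by
    intro σ
    ext τ
    simp only [badTuples, commonIn, mem_filter, Fintype.mem_piFinset, mem_bipartiteBelow,
      forall_and, forall_comm (α := ι) (β := κ)]
    tauto
  simp only [hbad]
  rw [← sum_card_bipartiteAbove_eq_sum_card_bipartiteBelow]
  calc _ ≤ #(badTuples ι R h W S) • h ^ Fintype.card κ := by
        refine sum_le_card_nsmul _ _ _ fun τ hτ ↦ ?_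
        rw [bipartiteAbove, card_filter_piFinset_const_forall S fun v ↦ ∀ i, R (τ i) v]
        exact Nat.pow_le_pow_left (mem_filter.1 hτ).2.le _
    _ ≤ #W ^ Fintype.card ι * h ^ Fintype.card κ := by
        rw [smul_eq_mul, ← card_univ (α := ι), ← prod_const, ← Fintype.card_piFinset]
        exact Nat.mul_le_mul_right _ (card_filter_le _ _)

theorem exists_half_le_and_mul_le_of_sum_le {Ω : Type*} {s : Finset Ω} (hs : s.Nonempty)
    {f g : Ω → ℝ} {a b m : ℝ} (ha : 0 < a) (hb : 0 < b) (hg : ∀ ω ∈ s, 0 ≤ g ω)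
    (hfm : ∀ ω ∈ s, f ω ≤ m) (hf : #s * a ≤ ∑ ω ∈ s, f ω) (hgb : ∑ ω ∈ s, g ω ≤ #s * b) :
    ∃ ω ∈ s, a / 2 ≤ f ω ∧ a * g ω ≤ 2 * b * m := by
  obtain ⟨ω, hω, hle⟩ : ∃ ω ∈ s, a / 2 ≤ f ω - a / (2 * b) * g ω := by
    refine exists_le_of_sum_le hs ?_
    rw [sum_const, nsmul_eq_mul, sum_sub_distrib, ← mul_sum]
    have hgb' : a / (2 * b) * ∑ ω ∈ s, g ω ≤ #s * a / 2 := by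
      calc a / (2 * b) * ∑ ω ∈ s, g ω ≤ a / (2 * b) * (#s * b) := by gcongr
        _ = #s * a / 2 := by field_simp
    linarith
  have hg' : 0 ≤ a / (2 * b) * g ω := mul_nonneg (by positivity) (hg ω hω)
  refine ⟨ω, hω, by linarith, ?_⟩
  calc a * g ω = 2 * b * (a / (2 * b) * g ω) := by field_simp
    _ ≤ 2 * b * m := by
        gcongr
        linarith [hfm ω hω]

/-- Dependent random choice: `U` is the common in-neighbourhood in `W` of `t` random elements of
`S`. -/
theorem exists_large_subset_card_badTuples_le [DecidableEq ι] {W : Finset α} {S : Finset β}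
    {δ : ℝ} (hδ : 0 < δ) (hW : W.Nonempty) (hS : S.Nonempty) {h : ℕ} (hh : 0 < h)
    (hdense : δ * #W * #S ≤ ∑ w ∈ W, (#(S.bipartiteAbove R w) : ℝ)) (t : ℕ) :
    ∃ U ⊆ W, δ ^ t * #W / 2 ≤ #U ∧
      (#(badTuples ι R h U S) : ℝ) ≤ 2 * #W ^ Fintype.card ι * (h / (δ * #S)) ^ t := by
  have hpi : #(Fintype.piFinset fun _ : Fin t ↦ S) = #S ^ t := Fintype.card_piFinset_const S t
  obtain ⟨σ, -, hlarge, hbad⟩ := exists_half_le_and_mul_le_of_sum_le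
    (s := Fintype.piFinset fun _ : Fin t ↦ S) (f := fun σ ↦ #(commonIn R W σ))
    (g := fun σ ↦ #(badTuples ι R h (commonIn R W σ) S)) (a := δ ^ t * #W)
    (b := #W ^ Fintype.card ι * (h / #S) ^ t) (m := #W) hS.piFinset_const (by positivity)
    (by positivity) (fun _ _ ↦ by positivity)
    (fun _ _ ↦ mod_cast card_le_card (commonIn_subset R W _))
    (by
      have hsum := sum_card_commonIn (κ := Fin t) R W S
      rw [Fintype.card_fin] at hsum
      rw [hpi, ← Nat.cast_sum, hsum]
      exact_mod_cast pow_mul_card_le_sum_card_pow R hδ.le hdense t)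
    (by
      have hsum := sum_card_badTuples_commonIn_le (ι := ι) (κ := Fin t) R h W S
      rw [Fintype.card_fin] at hsum
      rw [hpi, ← Nat.cast_sum]
      calc _ ≤ (#W ^ Fintype.card ι * h ^ t : ℝ) := mod_cast hsum
        _ = _ := by
          push_cast
          rw [div_pow]
          field_simp)
  refine ⟨commonIn R W σ, commonIn_subset R W σ, hlarge, ?_⟩
  refine le_of_mul_le_mul_left (hbad.trans_eq ?_) (show 0 < δ ^ t * #W by positivity)
  simp only [div_pow, mul_pow]
  field_simp

end DependentRandomChoice

section Greedy

variable {α β ι : Type*} {M : ℕ}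

theorem card_filter_mul_inv_pow_le [DecidableEq α] [DecidableEq β] (hM : 0 < M)
    (p : Finset (α × β)) (x : α) {A : Finset β} (hA : M ≤ #A) :
    #{v ∈ A | ∀ e ∈ p, e.1 = x → e.2 = v} * (M : ℝ)⁻¹ ^ #{e ∈ p | e.1 ≠ x} ≤
      #A * (M : ℝ)⁻¹ ^ #p := by
  rcases {v ∈ A | ∀ e ∈ p, e.1 = x → e.2 = v}.eq_empty_or_nonempty with hempty | ⟨v, hv⟩
  · rw [hempty, card_empty, Nat.cast_zero, zero_mul]
    positivity
  have hsub : {e ∈ p | e.1 = x} ⊆ {(x, v)} := fun e he ↦ by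
    obtain ⟨hep, hex⟩ := mem_filter.1 he
    exact mem_singleton.2 (Prod.ext hex ((mem_filter.1 hv).2 e hep hex))
  rw [← card_filter_add_card_filter_not (s := p) fun e ↦ e.1 = x]
  rcases subset_singleton_iff.1 hsub with hnone | hone
  · rw [hnone, card_empty, zero_add]
    gcongr
    exact filter_subset _ _
  · have hle : #{v ∈ A | ∀ e ∈ p, e.1 = x → e.2 = v} ≤ 1 := by
      have hxv : (x, v) ∈ {e ∈ p | e.1 = x} := hone ▸ mem_singleton_self _
      refine card_le_card (t := {v}) fun w hw ↦ mem_singleton.2 ?_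
      exact ((mem_filter.1 hw).2 _ (mem_filter.1 hxv).1 rfl).symm
    have hAM : (1 : ℝ) ≤ #A * (M : ℝ)⁻¹ := by
      rw [← div_eq_mul_inv, one_le_div₀ (by positivity)]
      exact_mod_cast hA
    rw [hone, card_singleton, pow_add, pow_one, ← mul_assoc]
    gcongr
    exact (Nat.cast_le_one.2 hle).trans hAM

theorem exists_mem_sum_inv_pow_lt_one [DecidableEq α] [DecidableEq β] (hM : 0 < M)
    {A : Finset β} (hA : M ≤ #A) (x : α) {I : Finset ι}
    {p : ι → Finset (α × β)} (hsum : ∑ i ∈ I, (M : ℝ)⁻¹ ^ #(p i) < 1) :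
    ∃ v ∈ A, ∑ i ∈ I with ∀ e ∈ p i, e.1 = x → e.2 = v,
      (M : ℝ)⁻¹ ^ #{e ∈ p i | e.1 ≠ x} < 1 := by
  have hA' : (0 : ℝ) < #A := mod_cast hM.trans_le hA
  refine exists_lt_of_sum_lt (s := A) (g := fun _ ↦ (1 : ℝ)) ?_
  calc ∑ v ∈ A, ∑ i ∈ I with ∀ e ∈ p i, e.1 = x → e.2 = v, (M : ℝ)⁻¹ ^ #{e ∈ p i | e.1 ≠ x}
      = ∑ i ∈ I,
          #{v ∈ A | ∀ e ∈ p i, e.1 = x → e.2 = v} * (M : ℝ)⁻¹ ^ #{e ∈ p i | e.1 ≠ x} := by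
        simp only [sum_filter]
        rw [sum_comm]
        simp only [← sum_filter, sum_const, nsmul_eq_mul]
    _ ≤ ∑ i ∈ I, #A * (M : ℝ)⁻¹ ^ #(p i) :=
        sum_le_sum fun i _ ↦ card_filter_mul_inv_pow_le hM (p i) x hA
    _ < ∑ _v ∈ A, (1 : ℝ) := by
        rw [← mul_sum, sum_const, nsmul_eq_mul]
        gcongr

theorem eq_empty_of_sum_inv_pow_card_lt_one {γ : Type*} {I : Finset ι} {p : ι → Finset γ}
    (hp : ∀ i ∈ I, p i = ∅) (hsum : ∑ i ∈ I, (M : ℝ)⁻¹ ^ #(p i) < 1) : I = ∅ := by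
  rw [sum_congr rfl fun i hi ↦ by rw [hp i hi, card_empty, pow_zero], sum_const, nsmul_one,
    Nat.cast_lt_one] at hsum
  exact card_eq_zero.1 hsum

/-- The method of conditional expectations: `∑ i, M⁻¹ ^ #(p i)` bounds the expected number of
patterns realised by a random greedy choice. The values of `φ` are fixed one at a time without
increasing this number, and the patterns already violated are discarded. -/
theorem exists_injOn_forall_exists_ne [Nonempty β] (hM : 0 < M) {S : Finset α}
    {N : α → Finset β} (hN : ∀ x ∈ S, #S + M ≤ #(N x)) {I : Finset ι}
    {p : ι → Finset (α × β)} (hp : ∀ i ∈ I, ∀ e ∈ p i, e.1 ∈ S)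
    (hsum : ∑ i ∈ I, (M : ℝ)⁻¹ ^ #(p i) < 1) :
    ∃ φ : α → β, (∀ x ∈ S, φ x ∈ N x) ∧ Set.InjOn φ S ∧ ∀ i ∈ I, ∃ e ∈ p i, φ e.1 ≠ e.2 := by
  classical
  induction S using Finset.induction_on generalizing N I p with
  | empty =>
    have hI : I = ∅ := eq_empty_of_sum_inv_pow_card_lt_one
      (fun i hi ↦ eq_empty_of_forall_notMem fun e he ↦ notMem_empty _ (hp i hi e he)) hsum
    exact ⟨fun _ ↦ Classical.arbitrary β, by simp, by simp, by simp [hI]⟩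
  | insert x S hx ih =>
    simp only [card_insert_of_notMem hx] at hN
    obtain ⟨v, hv, hlt⟩ := exists_mem_sum_inv_pow_lt_one hM (A := N x)
      (by linarith [hN x (mem_insert_self x S)]) x hsum
    obtain ⟨φ, hφN, hφ, hφp⟩ := ih (N := fun y ↦ (N y).erase v)
      (p := fun i ↦ {e ∈ p i | e.1 ≠ x})
      (fun y hy ↦ by
        have := hN y (mem_insert_of_mem hy)
        have := pred_card_le_card_erase (s := N y) (a := v)
        lia)
      (fun i hi e he ↦ by
        obtain ⟨he, hex⟩ := mem_filter.1 he
        exact mem_of_mem_insert_of_ne (hp i (mem_filter.1 hi).1 e he) hex) hlt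
    have hupdate : ∀ y ∈ S, Function.update φ x v y = φ y := fun y hy ↦
      Function.update_of_ne (ne_of_mem_of_not_mem hy hx) _ _
    refine ⟨Function.update φ x v, ?_, ?_, fun i hi ↦ ?_⟩
    · refine forall_mem_insert _ _ _ |>.2 ⟨by rwa [Function.update_self], fun y hy ↦ ?_⟩
      rw [hupdate y hy]
      exact mem_of_mem_erase (hφN y hy)
    · rw [coe_insert, Set.injOn_insert (mod_cast hx), Function.update_self]
      refine ⟨hφ.congr fun y hy ↦ (hupdate y hy).symm, ?_⟩
      rintro ⟨y, hy, hyv⟩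
      exact ne_of_mem_erase (hφN y hy) ((hupdate y hy).symm.trans hyv)
    · by_cases hcons : ∀ e ∈ p i, e.1 = x → e.2 = v
      · obtain ⟨e, he, hne⟩ := hφp i (mem_filter.2 ⟨hi, hcons⟩)
        obtain ⟨hep, hex⟩ := mem_filter.1 he
        exact ⟨e, hep, by rwa [Function.update_of_ne hex]⟩
      · push Not at hcons
        obtain ⟨e, hep, rfl, hev⟩ := hcons
        exact ⟨e, hep, by rwa [Function.update_self, ne_comm]⟩

end Greedy

section Embedding

variable {α β : Type*} (R : β → β → Prop) [∀ a b, Decidable (R a b)]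

/-- So few `(k + 1)`-tuples of `U` have fewer than `2 * d.choose (k + 1)` common out-neighbours in
`V` that the levels `k` and `k + 1` of a `d`-dimensional cube can be placed in `U` and `V`: if each
vertex of the level `k` is chosen at random among `d.choose k` candidates, then the expected number
of vertices of the level `k + 1` above a bad tuple is less than `1`. -/
def FewBadTuples (d k : ℕ) (U V : Finset β) : Prop :=
  d.choose (k + 1) * #(badTuples (Fin (k + 1)) R (2 * d.choose (k + 1)) U V) < d.choose k ^ (k + 1)

theorem fewBadTuples_self (d : ℕ) (U V : Finset β) : FewBadTuples R d d U V := by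
  simp [FewBadTuples]

variable [DecidableEq α]

/-- The graph of an assignment `τ` of images to the lower neighbours of the cube vertex `z`, the
neighbour `z.erase i` being sent to `τ i`. It is the pattern that the greedy choice avoids when `τ`
is a bad tuple. -/
def lowerGraph [DecidableEq β] (z : Finset α) (τ : z → β) : Finset (Finset α × β) :=
  univ.image fun i : z ↦ (z.erase i, τ i)

theorem card_lowerGraph [DecidableEq β] (z : Finset α) (τ : z → β) : #(lowerGraph z τ) = #z := by
  rw [lowerGraph, card_image_of_injective _ fun i j hij ↦ ?_, card_univ, Fintype.card_coe]
  exact Subtype.ext (erase_injOn z i.2 j.2 (Prod.ext_iff.1 hij).1)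

variable [Fintype α]

variable (α) in
/-- The bad tuples of `U`, `V`, viewed as assignments of images to the lower neighbours of the
vertices `z` of the level `k + 1` of the cube on `α`. -/
def badAssignments (k : ℕ) (U V : Finset β) : Finset (Σ z : Finset α, z → β) :=
  (powersetCard (k + 1) univ).sigma fun z ↦
    badTuples z R (2 * (Fintype.card α).choose (k + 1)) U V

variable {R} {k : ℕ} {U V : Finset β}

theorem card_fst_of_mem_badAssignments {τ : Σ z : Finset α, z → β}
    (hτ : τ ∈ badAssignments α R k U V) : #τ.1 = k + 1 :=
  mem_powersetCard_univ.1 (mem_sigma.1 hτ).1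

theorem FewBadTuples.sum_inv_pow_lt_one [DecidableEq β]
    (hUV : FewBadTuples R (Fintype.card α) k U V) (hk : k ≤ Fintype.card α) :
    ∑ τ ∈ badAssignments α R k U V,
      ((Fintype.card α).choose k : ℝ)⁻¹ ^ #(lowerGraph τ.1 τ.2) < 1 := by
  have hcard : ∀ z ∈ powersetCard (k + 1) (univ : Finset α),
      #(badTuples z R (2 * (Fintype.card α).choose (k + 1)) U V) =
        #(badTuples (Fin (k + 1)) R (2 * (Fintype.card α).choose (k + 1)) U V) := fun z hz ↦
    card_badTuples_congr R (z.equivFinOfCardEq (mem_powersetCard_univ.1 hz)) _ U V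
  have hpos := Nat.choose_pos hk
  rw [sum_congr rfl fun τ hτ ↦ by rw [card_lowerGraph, card_fst_of_mem_badAssignments hτ],
    sum_const, badAssignments, card_sigma, sum_congr rfl hcard, sum_const, card_powersetCard,
    card_univ, nsmul_eq_mul, inv_pow, ← div_eq_mul_inv, div_lt_one₀ (by positivity)]
  exact_mod_cast hUV

theorem FewBadTuples.exists_layer (hUV : FewBadTuples R (Fintype.card α) k U V)
    (hk : k ≤ Fintype.card α) {N : Finset α → Finset β} (hNU : ∀ x, #x = k → N x ⊆ U)
    (hN : ∀ x, #x = k → 2 * (Fintype.card α).choose k ≤ #(N x)) :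
    ∃ ψ : Finset α → β, (∀ x, #x = k → ψ x ∈ N x) ∧ Set.InjOn ψ {x | #x = k} ∧
      ∀ z : Finset α, #z = k + 1 → 2 * (Fintype.card α).choose (k + 1) ≤
        #(commonOut R V fun i : z ↦ ψ (z.erase i)) := by
  classical
  have hpos := Nat.choose_pos hk
  obtain ⟨x₀, -, hx₀⟩ := exists_subset_card_eq (card_univ (α := α) ▸ hk)
  obtain ⟨v₀, -⟩ : (N x₀).Nonempty := card_pos.1 (by linarith [hN x₀ hx₀])
  have : Nonempty β := ⟨v₀⟩
  have hcard : ∀ {z : Finset α} (i : z), #z = k + 1 → #(z.erase i) = k := fun i hz ↦ by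
    rw [card_erase_of_mem i.2, hz, Nat.add_sub_cancel]
  obtain ⟨ψ, hψN, hψ, hψp⟩ := exists_injOn_forall_exists_ne hpos
    (S := powersetCard k (univ : Finset α)) (N := N) (I := badAssignments α R k U V)
    (p := fun τ ↦ lowerGraph τ.1 τ.2)
    (fun x hx ↦ by
      rw [card_powersetCard, card_univ, ← two_mul]
      exact hN x (mem_powersetCard_univ.1 hx))
    (fun τ hτ e he ↦ by
      obtain ⟨i, -, rfl⟩ := mem_image.1 he
      exact mem_powersetCard_univ.2 (hcard i (card_fst_of_mem_badAssignments hτ)))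
    (hUV.sum_inv_pow_lt_one hk)
  simp only [mem_powersetCard_univ] at hψN
  refine ⟨ψ, hψN, hψ.mono fun x hx ↦ mem_coe.2 (mem_powersetCard_univ.2 hx), fun z hz ↦ ?_⟩
  by_contra! hfew
  have hU : ∀ i : z, ψ (z.erase i) ∈ U := fun i ↦ hNU _ (hcard i hz) (hψN _ (hcard i hz))
  have hbad : ⟨z, fun i ↦ ψ (z.erase i)⟩ ∈ badAssignments α R k U V :=
    mem_sigma.2 ⟨mem_powersetCard_univ.2 hz, mem_filter.2 ⟨Fintype.mem_piFinset.2 hU, hfew⟩⟩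
  obtain ⟨e, he, hne⟩ := hψp _ hbad
  obtain ⟨i, -, rfl⟩ := mem_image.1 he
  exact hne rfl

variable (R) in
/-- `ψ` maps the level `k` of the cube on `α` injectively to `V k`, leaving enough candidates in
`V (k + 1)` for every vertex of the level `k + 1`. The values of `ψ` off the level `k` are junk. -/
structure IsExtendableLayer (V : ℕ → Finset β) (k : ℕ) (ψ : Finset α → β) : Prop where
  mem : ∀ x, #x = k → ψ x ∈ V k
  injOn : Set.InjOn ψ {x | #x = k}
  two_mul_choose_le : ∀ z : Finset α, #z = k + 1 → 2 * (Fintype.card α).choose (k + 1) ≤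
    #(commonOut R (V (k + 1)) fun i : z ↦ ψ (z.erase i))

theorem exists_isExtendableLayer_zero {V : ℕ → Finset β} (h0 : 2 ≤ #(V 0))
    (hV : FewBadTuples R (Fintype.card α) 0 (V 0) (V 1)) :
    ∃ ψ : Finset α → β, IsExtendableLayer R V 0 ψ := by
  obtain ⟨ψ, hmem, hinj, hcand⟩ := hV.exists_layer (Nat.zero_le _) (N := fun _ ↦ V 0)
    (fun _ _ ↦ Subset.rfl) (fun _ _ ↦ by rwa [Nat.choose_zero_right])
  exact ⟨ψ, hmem, hinj, hcand⟩

theorem IsExtendableLayer.exists_succ {V : ℕ → Finset β} {ψ : Finset α → β}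
    (hψ : IsExtendableLayer R V k ψ) (hk : k < Fintype.card α)
    (hV : FewBadTuples R (Fintype.card α) (k + 1) (V (k + 1)) (V (k + 2))) :
    ∃ ψ' : Finset α → β, IsExtendableLayer R V (k + 1) ψ' ∧
      ∀ z, #z = k + 1 → ∀ i ∈ z, R (ψ (z.erase i)) (ψ' z) := by
  obtain ⟨ψ', hmem, hinj, hcand⟩ := hV.exists_layer hk
    (N := fun z ↦ commonOut R (V (k + 1)) fun i : z ↦ ψ (z.erase i))
    (fun _ _ ↦ filter_subset _ _) hψ.two_mul_choose_le
  exact ⟨ψ', ⟨fun z hz ↦ (mem_filter.1 (hmem z hz)).1, hinj, hcand⟩,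
    fun z hz i hi ↦ (mem_filter.1 (hmem z hz)).2 ⟨i, hi⟩⟩

theorem exists_injective_forall_erase {V : ℕ → Finset β} (h0 : 2 ≤ #(V 0))
    (hdisj : (Set.Iic (Fintype.card α)).PairwiseDisjoint V)
    (hV : ∀ k < Fintype.card α, FewBadTuples R (Fintype.card α) k (V k) (V (k + 1))) :
    ∃ φ : Finset α → β, Function.Injective φ ∧ (∀ x, φ x ∈ V #x) ∧
      ∀ y, ∀ i ∈ y, R (φ (y.erase i)) (φ y) := by
  have hV' : ∀ k ≤ Fintype.card α, FewBadTuples R (Fintype.card α) k (V k) (V (k + 1)) := by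
    intro k hk
    rcases hk.lt_or_eq with hk | rfl
    · exact hV k hk
    · exact fewBadTuples_self R _ _ _
  obtain ⟨ψ, hψ, hadj⟩ := exists_chain_succ (d := Fintype.card α)
    (Q := fun k ψ ψ' ↦ ∀ z, #z = k + 1 → ∀ i ∈ z, R (ψ (z.erase i)) (ψ' z))
    (exists_isExtendableLayer_zero h0 (hV' 0 (Nat.zero_le _)))
    fun k hk ψ hψ ↦ IsExtendableLayer.exists_succ hψ hk (hV' (k + 1) hk)
  have hmem : ∀ x : Finset α, ψ #x x ∈ V #x := fun x ↦ (hψ #x x.card_le_univ).mem x rfl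
  refine ⟨fun x ↦ ψ #x x, fun x y hxy ↦ ?_, hmem, fun y i hi ↦ ?_⟩
  · change ψ #x x = ψ #y y at hxy
    have hcard : #x = #y := hdisj.elim_finset x.card_le_univ y.card_le_univ _ (hmem x)
      (hxy ▸ hmem y)
    exact (hψ #x x.card_le_univ).injOn rfl hcard.symm (hcard ▸ hxy)
  · obtain ⟨k, hk⟩ := Nat.exists_eq_succ_of_ne_zero (card_ne_zero_of_mem hi)
    have hyk : k < Fintype.card α := Nat.lt_of_succ_le (hk ▸ y.card_le_univ)
    simp only [card_erase_of_mem hi, hk, Nat.succ_eq_add_one, Nat.add_sub_cancel]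
    exact hadj k hyk y hk i hi

theorem containsCopy_hypercubeDigraph {W : Type*} {T : Digraph W} {d : ℕ}
    {φ : Finset (Fin d) → W} (hφ : Function.Injective φ)
    (hadj : ∀ y, ∀ i ∈ y, T.Adj (φ (y.erase i)) (φ y)) : T.ContainsCopy (hypercubeDigraph d) := by
  refine ⟨fun u ↦ φ {i | u i}, fun u v huv ↦ funext fun i ↦ ?_, fun u v ⟨i, hui, hvi, huv⟩ ↦ ?_⟩
  · have := Finset.ext_iff.1 (hφ huv) i
    simpa [Bool.coe_iff_coe] using this
  · have hu : ({j | u j} : Finset (Fin d)) = ({j | v j} : Finset (Fin d)).erase i := by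
      ext j
      by_cases hj : j = i
      · simp [hj, hui]
      · simp [hj, huv j hj]
    simp only [hu]
    exact hadj _ i (by simpa using hvi)

end Embedding

section Parameters

/-- The common length of the blocks of the median order that contain the levels of the cube. -/
def blockLength (d : ℕ) : ℕ := 2 ^ 20 * d * 17 ^ d

theorem sixtyfour_le_blockLength {d : ℕ} (hd : 0 < d) : 64 ≤ blockLength d :=
  calc 64 ≤ 2 ^ 20 * 1 * 1 := by norm_num
    _ ≤ 2 ^ 20 * d * 17 ^ d := by gcongr; exacts [hd, Nat.one_le_pow _ _ (by norm_num)]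

theorem choose_mul_sixteen_pow_le (d q : ℕ) : d.choose q * 16 ^ q ≤ 17 ^ d := by
  rcases lt_or_ge d q with hq | hq
  · simp [Nat.choose_eq_zero_of_lt hq]
  calc d.choose q * 16 ^ q = 16 ^ q * 1 ^ (d - q) * d.choose q := by ring
    _ ≤ ∑ m ∈ range (d + 1), 16 ^ m * 1 ^ (d - m) * d.choose m :=
        single_le_sum (f := fun m ↦ 16 ^ m * 1 ^ (d - m) * d.choose m)
          (fun _ _ ↦ Nat.zero_le _) (mem_range.2 (Nat.lt_succ_of_le hq))
    _ = (16 + 1) ^ d := (add_pow 16 1 d).symm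

theorem eight_mul_choose_mul_pow_lt_one (d : ℕ) {q : ℕ} (hq : 0 < q) :
    8 * (d.choose q : ℝ) * (16 ^ q * d.choose q / (64 * 17 ^ d)) ^ q < 1 := by
  have hchoose : (d.choose q : ℝ) ≤ 2 ^ d := mod_cast Nat.choose_le_two_pow d q
  have hbase : (16 : ℝ) ^ q * d.choose q / (64 * 17 ^ d) ≤ 1 / 64 := by
    have : (d.choose q * 16 ^ q : ℝ) ≤ 17 ^ d := mod_cast choose_mul_sixteen_pow_le d q
    rw [div_le_div_iff₀ (by positivity) (by positivity)]
    linarith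
  rcases le_total d (2 * q) with hdq | hdq
  · calc 8 * (d.choose q : ℝ) * (16 ^ q * d.choose q / (64 * 17 ^ d)) ^ q
        ≤ 8 * 2 ^ (2 * q) * (1 / 64) ^ q := by
          gcongr
          exact hchoose.trans (pow_le_pow_right₀ one_le_two hdq)
      _ = 8 * (1 / 16) ^ q := by rw [pow_mul, mul_assoc, ← mul_pow]; norm_num
      _ ≤ 8 * (1 / 16) ^ 1 := by
          gcongr 8 * ?_
          exact pow_le_pow_of_le_one (by norm_num) (by norm_num) hq
      _ < 1 := by norm_num
  · calc 8 * (d.choose q : ℝ) * (16 ^ q * d.choose q / (64 * 17 ^ d)) ^ q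
        ≤ 8 * (d.choose q : ℝ) * (16 ^ q * d.choose q / (64 * 17 ^ d)) := by
          gcongr
          exact pow_le_of_le_one (by positivity) (hbase.trans (by norm_num)) hq.ne'
      _ ≤ 8 * 2 ^ d * (4 ^ d * 2 ^ d / (64 * 17 ^ d)) := by
          gcongr
          calc (16 : ℝ) ^ q = 4 ^ (2 * q) := by rw [pow_mul]; norm_num
            _ ≤ 4 ^ d := pow_le_pow_right₀ (by norm_num) hdq
      _ = (16 / 17) ^ d / 8 := by
          rw [div_pow, show (16 : ℝ) = 2 * 4 * 2 by norm_num, mul_pow, mul_pow]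
          field_simp
          norm_num
      _ < 1 := by linarith [pow_le_one₀ (n := d) (show (0 : ℝ) ≤ 16 / 17 by norm_num) (by norm_num)]

theorem choose_succ_le_mul_choose (d k : ℕ) : d.choose (k + 1) ≤ d * d.choose k :=
  calc d.choose (k + 1) ≤ d.choose (k + 1) * (k + 1) := Nat.le_mul_of_pos_right _ k.succ_pos
    _ = d.choose k * (d - k) := Nat.choose_succ_right_eq d k
    _ ≤ d * d.choose k := by rw [mul_comm]; gcongr; exact d.sub_le k

theorem one_div_le_half_sub_pow {r q : ℕ} (hr : 0 < r) (hq : 2 * q ≤ r) :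
    1 / (4 * 4 ^ q) ≤ ((1 - 1 / r : ℝ) / 2) ^ (2 * q) := by
  have hr' : (1 : ℝ) ≤ r := mod_cast hr
  have hinv : 1 / (r : ℝ) ≤ 1 := div_le_one_of_le₀ hr' (by positivity)
  have hhalf : (1 : ℝ) / 2 ≤ (1 - 1 / r) ^ q :=
    calc (1 : ℝ) / 2 ≤ 1 - q / r := by
          rw [le_sub_comm, div_le_iff₀ (by positivity)]
          linarith [show (2 * q : ℝ) ≤ r from mod_cast hq]
      _ = 1 + q * -(1 / r) := by ring
      _ ≤ (1 + -(1 / r)) ^ q := one_add_mul_le_pow (by linarith) q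
      _ = (1 - 1 / r) ^ q := by rw [← sub_eq_add_neg]
  calc (1 : ℝ) / (4 * 4 ^ q) = (1 / 2) ^ 2 / 4 ^ q := by rw [← div_div]; norm_num
    _ ≤ ((1 - 1 / r) ^ q) ^ 2 / 4 ^ q := by gcongr
    _ = _ := by rw [div_pow, pow_mul 2, mul_comm 2 q, pow_mul]; norm_num

theorem two_mul_pow_mul_div_pow_le {d k : ℕ} (hd : 0 < d) {s δ : ℝ}
    (hδq : 1 / (4 * 4 ^ (k + 1)) ≤ δ ^ (2 * (k + 1)))
    (hs : blockLength d / (32 * 4 ^ (k + 1)) ≤ s) :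
    2 * (blockLength d : ℝ) ^ (k + 1) *
        ((2 * d.choose (k + 1) : ℕ) / (δ * s)) ^ (2 * (k + 1)) ≤
      8 * (d.choose k * (16 ^ (k + 1) * d.choose (k + 1) / (64 * 17 ^ d))) ^ (k + 1) := by
  have hm : (d.choose (k + 1) : ℝ) ≤ d * d.choose k := mod_cast choose_succ_le_mul_choose d k
  set q := k + 1
  set m : ℝ := (d.choose q : ℝ)
  have hL : (0 : ℝ) < blockLength d := by unfold blockLength; positivity
  have hs' : 0 < s := hs.trans_lt' (by positivity)
  have hratio : (2 * d.choose q : ℕ) / s ≤ 64 * 4 ^ q * m / blockLength d := by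
    calc ((2 * d.choose q : ℕ) : ℝ) / s = 2 * m / s := by push_cast; rfl
      _ ≤ 2 * m / (blockLength d / (32 * 4 ^ q)) := by gcongr
      _ = 64 * 4 ^ q * m / blockLength d := by field_simp; ring
  calc 2 * (blockLength d : ℝ) ^ q * ((2 * d.choose q : ℕ) / (δ * s)) ^ (2 * q)
      = 2 * blockLength d ^ q * ((2 * d.choose q : ℕ) / s) ^ (2 * q) / δ ^ (2 * q) := by
        rw [mul_comm δ, ← div_div, div_pow _ δ, mul_div_assoc]
    _ ≤ 2 * blockLength d ^ q * (64 * 4 ^ q * m / blockLength d) ^ (2 * q) /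
          (1 / (4 * 4 ^ q)) := by gcongr
    _ = 8 * (4 * (blockLength d * (64 * 4 ^ q * m / blockLength d) ^ 2)) ^ q := by
        rw [mul_pow 4, mul_pow (blockLength d : ℝ), ← pow_mul]
        field_simp
        ring
    _ = 8 * (m * (16 ^ q * m / (64 * (d * 17 ^ d)))) ^ q := by
        have h16 : (16 : ℝ) ^ q = 4 ^ q * 4 ^ q := by rw [← mul_pow]; norm_num
        rw [h16, blockLength]
        push_cast
        congr 2
        field_simp
        norm_num
    _ ≤ 8 * (d * d.choose k * (16 ^ q * m / (64 * (d * 17 ^ d)))) ^ q := by gcongr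
    _ = 8 * (d.choose k * (16 ^ q * m / (64 * 17 ^ d))) ^ q := by
        congr 2
        field_simp

theorem fewBadTuples_of_card_badTuples_le {β : Type*} {R : β → β → Prop} [∀ a b, Decidable (R a b)]
    {d k : ℕ} {U V : Finset β} {δ s : ℝ} (hk : k < d)
    (hδq : 1 / (4 * 4 ^ (k + 1)) ≤ δ ^ (2 * (k + 1)))
    (hs : blockLength d / (32 * 4 ^ (k + 1)) ≤ s)
    (hbad : (#(badTuples (Fin (k + 1)) R (2 * d.choose (k + 1)) U V) : ℝ) ≤
      2 * blockLength d ^ (k + 1) * ((2 * d.choose (k + 1) : ℕ) / (δ * s)) ^ (2 * (k + 1))) :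
    FewBadTuples R d k U V := by
  have hchoose : 0 < d.choose k := Nat.choose_pos hk.le
  have hlt : (d.choose (k + 1) * #(badTuples (Fin (k + 1)) R (2 * d.choose (k + 1)) U V) : ℝ) <
      d.choose k ^ (k + 1) :=
    calc (d.choose (k + 1) * #(badTuples (Fin (k + 1)) R (2 * d.choose (k + 1)) U V) : ℝ)
        ≤ d.choose (k + 1) * (8 * (d.choose k *
            (16 ^ (k + 1) * d.choose (k + 1) / (64 * 17 ^ d))) ^ (k + 1)) := by
          gcongr
          exact hbad.trans (two_mul_pow_mul_div_pow_le (by lia) hδq hs)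
      _ = 8 * d.choose (k + 1) * (16 ^ (k + 1) * d.choose (k + 1) / (64 * 17 ^ d)) ^ (k + 1) *
            d.choose k ^ (k + 1) := by rw [mul_pow]; ring
      _ < 1 * d.choose k ^ (k + 1) := by
          gcongr
          exact eight_mul_choose_mul_pow_lt_one d k.succ_pos
      _ = d.choose k ^ (k + 1) := one_mul _
  exact_mod_cast hlt

end Parameters

section Layers

variable {R : ℕ → ℕ → Prop} [∀ a b, Decidable (R a b)] {N d : ℕ}

theorem IsMedianOrder.exists_fewBadTuples (hR : IsMedianOrder R N) {k n : ℕ} (hk : k < d)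
    (hdn : 2 * d ≤ n) (hn : (n + 1) * blockLength d ≤ N) {S : Finset ℕ}
    (hS : S ⊆ block (blockLength d) n)
    (hScard : (blockLength d / (32 * 4 ^ (k + 1)) : ℝ) ≤ #S) :
    ∃ m U, m < n ∧ n ≤ m + 2 * d ∧ U ⊆ block (blockLength d) m ∧
      (blockLength d / (32 * 4 ^ k) : ℝ) ≤ #U ∧ FewBadTuples R d k U S := by
  have hd : 0 < d := by lia
  have hL : 0 < blockLength d := (sixtyfour_le_blockLength hd).trans_lt' (by norm_num)
  obtain ⟨m, hmn, hnm, hdense⟩ := hR.exists_dense_block (r := 2 * d) (by lia) hdn hn hS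
  have hSne : S.Nonempty := by
    rw [← card_pos, ← Nat.cast_pos (α := ℝ)]
    exact hScard.trans_lt' (by positivity)
  have hWne : (block (blockLength d) m).Nonempty := card_pos.1 (by rwa [card_block])
  have hδ : (0 : ℝ) < (1 - 1 / (2 * d : ℕ)) / 2 := by
    have : 1 / ((2 * d : ℕ) : ℝ) < 1 := by
      rw [div_lt_one (by positivity)]
      exact_mod_cast (by lia : 1 < 2 * d)
    linarith
  have hδq := one_div_le_half_sub_pow (r := 2 * d) (q := k + 1) (by lia) (by lia)
  obtain ⟨U, hUW, hUcard, hbad⟩ := exists_large_subset_card_badTuples_le (ι := Fin (k + 1)) R hδ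
    hWne hSne (h := 2 * d.choose (k + 1)) (Nat.mul_pos two_pos (Nat.choose_pos hk))
    (by rwa [card_block]) (2 * (k + 1))
  rw [card_block] at hUcard hbad
  rw [Fintype.card_fin] at hbad
  refine ⟨m, U, hmn, hnm, hUW, hUcard.trans' ?_,
    fewBadTuples_of_card_badTuples_le hk hδq hScard hbad⟩
  calc (blockLength d / (32 * 4 ^ k) : ℝ) = 1 / (4 * 4 ^ (k + 1)) * blockLength d / 2 := by
        field_simp
        ring
    _ ≤ _ := by gcongr

theorem IsMedianOrder.exists_chain_fewBadTuples (hR : IsMedianOrder R N) (hd : 0 < d)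
    (hN : (2 * d ^ 2 + 1) * blockLength d ≤ N) :
    ∃ V : ℕ → Finset ℕ, 2 ≤ #(V 0) ∧ (∀ k ≤ d, V k ⊆ range N) ∧
      (Set.Iic d).PairwiseDisjoint V ∧ ∀ k < d, FewBadTuples R d k (V k) (V (k + 1)) := by
  obtain ⟨f, hf, hstep⟩ := exists_chain_pred (d := d)
    (P := fun k (s : ℕ × Finset ℕ) ↦ 2 * d * k ≤ s.1 ∧ (s.1 + 1) * blockLength d ≤ N ∧
      s.2 ⊆ block (blockLength d) s.1 ∧ (blockLength d / (32 * 4 ^ k) : ℝ) ≤ #s.2)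
    (Q := fun k s s' ↦ s.1 < s'.1 ∧ FewBadTuples R d k s.2 s'.2)
    ⟨(2 * d ^ 2, block (blockLength d) (2 * d ^ 2)), by lia, hN, Subset.rfl, by
      rw [card_block]
      have : (1 : ℝ) ≤ 4 ^ d := one_le_pow₀ (by norm_num)
      exact div_le_self (by positivity) (by linarith)⟩
    (by
      rintro k hk ⟨n, S⟩ ⟨hkn, hnN, hS, hScard⟩
      dsimp only at hkn hnN hS hScard
      obtain ⟨m, U, hmn, hnm, hU, hUcard, hfew⟩ :=
        hR.exists_fewBadTuples hk (by nlinarith) hnN hS hScard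
      refine ⟨(m, U), ⟨by lia, hnN.trans' ?_, hU, hUcard⟩, hmn, hfew⟩
      gcongr)
  have hmono : StrictMonoOn (fun k ↦ (f k).1) (Set.Iic d) :=
    strictMonoOn_Iic_of_lt_succ fun k hk ↦ (hstep k hk).1
  refine ⟨fun k ↦ (f k).2, ?_, fun k hk x hx ↦ ?_, fun j hj k hk hjk ↦ ?_,
    fun k hk ↦ (hstep k hk).2⟩
  · have hcard := (hf 0 (Nat.zero_le _)).2.2.2
    have hL : (64 : ℝ) ≤ blockLength d := mod_cast sixtyfour_le_blockLength hd
    rw [pow_zero, mul_one] at hcard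
    exact_mod_cast (show (2 : ℝ) ≤ blockLength d / 32 by linarith).trans hcard
  · have hx := (mem_Ico.1 ((hf k hk).2.2.1 hx)).2
    exact mem_range.2 (hx.trans_le (hf k hk).2.1)
  · exact (disjoint_block _ (hmono.injOn.ne hj hk hjk)).mono (hf j hj).2.2.1 (hf k hk).2.2.1

end Layers

theorem containsCopy_hypercubeDigraph_of_isTournament {V : Type*} [Fintype V] {T : Digraph V}
    (hT : T.IsTournament) {d : ℕ} (hd : 0 < d)
    (hV : (2 * d ^ 2 + 1) * blockLength d ≤ Fintype.card V) :
    T.ContainsCopy (hypercubeDigraph d) := by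
  classical
  have : Nonempty V := by
    have := sixtyfour_le_blockLength hd
    exact Fintype.card_pos_iff.1 (hV.trans_lt' (by positivity))
  obtain ⟨σ, hσ, hmedian⟩ := exists_isMedianOrder hT
  obtain ⟨U, hU0, hUrange, hUdisj, hU⟩ := hmedian.exists_chain_fewBadTuples hd hV
  obtain ⟨φ, hφ, hφU, hadj⟩ := exists_injective_forall_erase (α := Fin d) hU0
    (by rwa [Fintype.card_fin]) (by rwa [Fintype.card_fin])
  have hφlt : ∀ x, φ x < Fintype.card V := fun x ↦
    mem_range.1 (hUrange _ (x.card_le_univ.trans_eq (Fintype.card_fin d)) (hφU x))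
  exact containsCopy_hypercubeDigraph (φ := σ ∘ φ)
    (fun x y hxy ↦ hφ (hσ (hφlt x) (hφlt y) hxy)) hadj

end OrientedRamsey

/-- There is an absolute constant `C > 0` such that
`r⃗(Q⃗_d) ≤ C · d³ · 17^d` for all `d ≥ 1`. -/
theorem hypercube_oriented_ramsey :
    ∃ C : ℝ, 0 < C ∧ ∀ d : ℕ, 1 ≤ d →
      (orientedRamsey (hypercubeDigraph d) : ℝ) ≤ C * d ^ 3 * 17 ^ d := by
  refine ⟨3 * 2 ^ 20, by norm_num, fun d hd ↦ ?_⟩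
  have hle : orientedRamsey (hypercubeDigraph d) ≤
      (2 * d ^ 2 + 1) * OrientedRamsey.blockLength d :=
    Nat.sInf_le fun T hT ↦
      OrientedRamsey.containsCopy_hypercubeDigraph_of_isTournament hT hd (by simp)
  have hsq : 2 * d ^ 2 + 1 ≤ 3 * d ^ 2 := by nlinarith
  calc (orientedRamsey (hypercubeDigraph d) : ℝ)
      ≤ ((3 * d ^ 2 * OrientedRamsey.blockLength d : ℕ) : ℝ) := by
        exact_mod_cast hle.trans (by gcongr)
    _ = 3 * 2 ^ 20 * d ^ 3 * 17 ^ d := by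
        rw [OrientedRamsey.blockLength]
        push_cast
        ring
end

section
/- There exist constants c > 1 and Δ₀ such that for all integers Δ ≥ Δ₀, n ≥ Δ and H ≥ 2, there exists a graded digraph G with maximum degree at most Δ and a graded partition V(G) = V_1 ∪ ⋯ ∪ V_H with |V_i| ≤ n for all i ∈ [H], such that r⃗(G) > c^Δ · H · n; in particular r⃗(G) > c^Δ · |V(G)|. -/
/-- The degree of a vertex in the underlying undirected graph of a digraph. -/
noncomputable def Digraph.degree {V : Type*} (G : Digraph V) (v : V) : ℕ :=
  Nat.card {u : V | G.Adj v u ∨ G.Adj u v}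

/-!
All layers of `G` have `n` vertices, and consecutive layers are joined by copies of one sparse
random bipartite digraph `B` of degree `O(g)`, where `g` is a small constant times `Δ`. The
tournament is a transitive sequence of about `H / 2` blocks, each of which is a random tournament on
`4 ^ g` vertices blown up by transitive tournaments of size about `n / g`.

Two linear-sized sets in a block always have positive edge density in both directions, so with
probability `1 - exp(-Ω(g n))` over the choice of `B`, a given placement of a third of one layer and
a third of the next into a block maps some edge of `B` backwards. Only the vertex of the random
tournament under each image matters, so there are `2 ^ O(g n)` placements, and a suitable `B`
defeats all of them. In a copy of `G`, consecutive layers then cannot have a third of their vertices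
in the same block, nor can a third of a layer lie in earlier blocks than a third of its predecessor.
Hence a third of a layer moves on by a block every two layers, and the blocks run out.
-/

open Finset

section Tournaments

variable {U V W : Type*}

/-- The pullback of a digraph along a map of vertices. For an injection this is the induced
subdigraph, for a projection `V × σ → V` the blow-up by independent sets of size `|σ|`. -/
def comapDigraph (f : V → W) (T : Digraph W) : Digraph V where
  Adj u v := T.Adj (f u) (f v)

/-- The transitive tournament on a linearly ordered vertex set. -/
def transitiveTournament (V : Type*) [LinearOrder V] : Digraph V where
  Adj u v := u < v

/-- The lexicographic product: every vertex of `S` is replaced by a copy of `T`. -/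
def lexProduct (S : Digraph V) (T : Digraph W) : Digraph (V × W) where
  Adj u v := S.Adj u.1 v.1 ∨ u.1 = v.1 ∧ T.Adj u.2 v.2

theorem not_adj_of_adj {T : Digraph V} (hT : T.IsTournament) {u v : V} (h : T.Adj u v) :
    ¬ T.Adj v u := by
  have hne : u ≠ v := by
    rintro rfl
    exact hT.1 u h
  exact (hT.2 u v hne).1 h

theorem isTournament_comapDigraph {T : Digraph W} (hT : T.IsTournament) {f : V → W}
    (hf : f.Injective) : (comapDigraph f T).IsTournament :=
  ⟨fun v => hT.1 (f v), fun u v huv => hT.2 (f u) (f v) (hf.ne huv)⟩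

theorem isTournament_transitiveTournament [LinearOrder V] :
    (transitiveTournament V).IsTournament :=
  ⟨fun v => lt_irrefl v, fun _ _ huv => ⟨not_lt_of_gt, (lt_or_gt_of_ne huv).resolve_right⟩⟩

theorem isTournament_lexProduct {S : Digraph V} {T : Digraph W} (hS : S.IsTournament)
    (hT : T.IsTournament) : (lexProduct S T).IsTournament := by
  refine ⟨?_, ?_⟩
  · rintro ⟨i, a⟩ (h | ⟨-, h⟩)
    · exact hS.1 i h
    · exact hT.1 a h
  · rintro ⟨i, a⟩ ⟨j, b⟩ hne
    by_cases hij : i = j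
    · subst hij
      simpa [lexProduct, hS.1] using hT.2 a b (by rintro rfl; exact hne rfl)
    · simpa [lexProduct, hij, Ne.symm hij] using hS.2 i j hij

theorem containsCopy_trans {G : Digraph U} {S : Digraph V} {T : Digraph W}
    (hST : T.ContainsCopy S) (hGS : S.ContainsCopy G) : T.ContainsCopy G := by
  obtain ⟨φ, hφ, hφ_adj⟩ := hGS
  obtain ⟨ψ, hψ, hψ_adj⟩ := hST
  exact ⟨ψ ∘ φ, hψ.comp hφ, fun u v huv => hψ_adj _ _ (hφ_adj u v huv)⟩

theorem containsCopy_comapDigraph (T : Digraph W) {f : V → W} (hf : f.Injective) :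
    T.ContainsCopy (comapDigraph f T) :=
  ⟨f, hf, fun _ _ h => h⟩

theorem orientedRamsey_comapDigraph_equiv (G : Digraph W) (e : V ≃ W) :
    orientedRamsey (comapDigraph e G) = orientedRamsey G := by
  have hG : (comapDigraph e G).ContainsCopy G :=
    ⟨e.symm, e.symm.injective, fun u v huv => by simpa [comapDigraph] using huv⟩
  have hcopy : ∀ {N : ℕ} (T : Digraph (Fin N)),
      T.ContainsCopy (comapDigraph e G) ↔ T.ContainsCopy G := fun T =>
    ⟨fun h => containsCopy_trans h hG,
      fun h => containsCopy_trans h (containsCopy_comapDigraph G e.injective)⟩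
  simp only [orientedRamsey, hcopy]

theorem degree_comapDigraph_equiv (G : Digraph W) (e : V ≃ W) (v : V) :
    (comapDigraph e G).degree v = G.degree (e v) :=
  Nat.card_congr (e.subtypeEquiv fun _ => Iff.rfl)

open Classical in
theorem exists_card_le_two_mul_outdegree {T : Digraph V} (hT : T.IsTournament) {A : Finset V}
    (hA : A.Nonempty) : ∃ v ∈ A, #A ≤ 2 * #{u ∈ A | T.Adj v u} + 1 := by
  have hsum : ∑ v ∈ A, #{u ∈ A | T.Adj u v} ≤ ∑ v ∈ A, #{u ∈ A | T.Adj v u} :=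
    (sum_card_bipartiteAbove_eq_sum_card_bipartiteBelow T.Adj).ge
  obtain ⟨v, hv, hle⟩ := exists_le_of_sum_le hA hsum
  have hcover : A.erase v ⊆ {u ∈ A | T.Adj v u} ∪ {u ∈ A | T.Adj u v} := by
    intro u hu
    obtain ⟨huv, huA⟩ := mem_erase.1 hu
    have := hT.2 u v huv
    simp only [mem_union, mem_filter, huA, true_and]
    tauto
  have hcard := (card_le_card hcover).trans (card_union_le _ _)
  have := card_erase_add_one hv
  exact ⟨v, hv, by omega⟩

theorem exists_pairwise_adj_list {T : Digraph V} (hT : T.IsTournament) (M : ℕ) :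
    ∀ A : Finset V, 2 ^ M ≤ #A → ∃ l : List V, l.length = M ∧ (∀ v ∈ l, v ∈ A) ∧
      l.Pairwise T.Adj := by
  induction M with
  | zero => exact fun A _ => ⟨[], rfl, by simp, List.Pairwise.nil⟩
  | succ M ih =>
    classical
    intro A hA
    have hM := Nat.one_le_two_pow (n := M)
    rw [pow_succ] at hA
    obtain ⟨v, hv, hout⟩ := exists_card_le_two_mul_outdegree hT (card_pos.1 (by omega : 0 < #A))
    obtain ⟨l, hlen, hmem, hadj⟩ := ih {u ∈ A | T.Adj v u} (by omega)
    simp only [mem_filter] at hmem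
    refine ⟨v :: l, by rw [List.length_cons, hlen], ?_,
      List.pairwise_cons.2 ⟨fun u hu => (hmem u hu).2, hadj⟩⟩
    rintro u (_ | ⟨_, hu⟩)
    exacts [hv, (hmem u hu).1]

theorem containsCopy_transitiveTournament_of_two_pow_le [Fintype V] {T : Digraph V}
    (hT : T.IsTournament) {M : ℕ} (hM : 2 ^ M ≤ Fintype.card V) :
    T.ContainsCopy (transitiveTournament (Fin M)) := by
  obtain ⟨l, rfl, -, hl⟩ := exists_pairwise_adj_list hT M univ hM
  have hadj := List.pairwise_iff_get.1 hl
  refine ⟨l.get, .of_lt_imp_ne fun i j hij heq => ?_, hadj⟩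
  exact hT.1 _ (heq ▸ hadj i j hij)

theorem transitiveTournament_containsCopy_of_lt [Fintype V] {G : Digraph V} {f : V → ℕ}
    (hf : ∀ u v, G.Adj u v → f u < f v) :
    (transitiveTournament (Fin (Fintype.card V))).ContainsCopy G := by
  let e := Fintype.equivFin V
  let σ := Tuple.sort (f ∘ e.symm)
  refine ⟨σ.symm ∘ e, σ.symm.injective.comp e.injective, fun u v huv => ?_⟩
  by_contra hle
  have hmono := Tuple.monotone_sort (f ∘ e.symm) (not_lt.1 hle)
  simp only [Function.comp_apply, σ, Equiv.apply_symm_apply, Equiv.symm_apply_apply] at hmono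
  exact (hf u v huv).not_ge hmono

theorem card_lt_orientedRamsey [Finite V] [Fintype W] {G : Digraph V} {f : V → ℕ}
    (hf : ∀ u v, G.Adj u v → f u < f v) {T : Digraph W} (hT : T.IsTournament)
    (hG : ¬ T.ContainsCopy G) : Fintype.card W < orientedRamsey G := by
  have hmem : orientedRamsey G ∈
      {N | ∀ T : Digraph (Fin N), T.IsTournament → T.ContainsCopy G} := by
    have := Fintype.ofFinite V
    refine Nat.sInf_mem ⟨2 ^ Fintype.card V, fun S hS => ?_⟩
    exact containsCopy_trans
      (containsCopy_transitiveTournament_of_two_pow_le hS (Fintype.card_fin _).ge)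
      (transitiveTournament_containsCopy_of_lt hf)
  by_contra! hle
  obtain ⟨ι⟩ : Nonempty (Fin (orientedRamsey G) ↪ W) :=
    Function.Embedding.nonempty_of_card_le (by simpa using hle)
  exact hG (containsCopy_trans (containsCopy_comapDigraph T ι.injective)
    (hmem _ (isTournament_comapDigraph hT ι.injective)))

end Tournaments

section Counting

variable {α ι Ω : Type*}

theorem exists_forall_not_of_sum_lt_one [Fintype Ω] [Nonempty Ω] {I : Finset ι}
    {bad : ι → Ω → Prop} [∀ i, DecidablePred (bad i)] {w : ι → ℝ}
    (hw : ∀ i ∈ I, (#{ω | bad i ω} : ℝ) ≤ w i * Fintype.card Ω) (hsum : ∑ i ∈ I, w i < 1) :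
    ∃ ω, ∀ i ∈ I, ¬ bad i ω := by
  classical
  by_contra! hbad
  have hcover : (univ : Finset Ω) ⊆ I.biUnion fun i => {ω | bad i ω} := fun ω _ => by
    simpa using hbad ω
  have hcard := (card_le_card hcover).trans card_biUnion_le
  have : (0 : ℝ) < Fintype.card Ω := by exact_mod_cast Fintype.card_pos
  have hlt : (Fintype.card Ω : ℝ) < Fintype.card Ω := calc
    (Fintype.card Ω : ℝ) ≤ ∑ i ∈ I, (#{ω | bad i ω} : ℝ) := by exact_mod_cast hcard
    _ ≤ ∑ i ∈ I, w i * Fintype.card Ω := sum_le_sum hw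
    _ = (∑ i ∈ I, w i) * Fintype.card Ω := (sum_mul ..).symm
    _ < 1 * Fintype.card Ω := by gcongr
    _ = Fintype.card Ω := one_mul _
  exact hlt.false

theorem sum_pow_card_filter_eq [Fintype ι] [DecidableEq ι] (Q : Finset ι) (β : ι → Bool) (x : ℝ) :
    ∑ ω : ι → Bool, x ^ #{q ∈ Q | ω q = β q} = ((1 + x) / 2) ^ #Q * 2 ^ Fintype.card ι := by
  have hterm : ∀ ω : ι → Bool, x ^ #{q ∈ Q | ω q = β q} =
      ∏ q, if q ∈ Q then if ω q = β q then x else 1 else 1 := fun ω => by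
    rw [prod_ite_mem, univ_inter, ← prod_filter, prod_const]
  have hfactor : ∀ q, ∑ b : Bool, (if q ∈ Q then if b = β q then x else 1 else 1) =
      (if q ∈ Q then (1 + x) / 2 else 1) * 2 := fun q => by
    by_cases hq : q ∈ Q <;> cases β q <;> simp [hq, add_comm]
  simp only [hterm]
  have hprod := prod_univ_sum (fun _ : ι => (univ : Finset Bool))
    fun q b => if q ∈ Q then if b = β q then x else 1 else 1
  rw [Fintype.piFinset_univ] at hprod
  rw [← hprod]
  simp only [hfactor]
  rw [prod_mul_distrib, prod_ite_mem, univ_inter, prod_const, prod_const, card_univ]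

-- Markov's inequality for the variable `(3/4) ^ (4 * #{q ∈ Q | ω q = β q})`.
theorem card_four_mul_card_filter_le [Fintype ι] [DecidableEq ι] (Q : Finset ι) (β : ι → Bool) :
    (#{ω : ι → Bool | 4 * #{q ∈ Q | ω q = β q} ≤ #Q} : ℝ) ≤
      (9 / 10) ^ #Q * 2 ^ Fintype.card ι := by
  let y : (ι → Bool) → ℝ := fun ω => ((3 / 4) ^ 4) ^ #{q ∈ Q | ω q = β q}
  have hlarge : ∀ ω ∈ ({ω | 4 * #{q ∈ Q | ω q = β q} ≤ #Q} : Finset (ι → Bool)),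
      (3 / 4 : ℝ) ^ #Q ≤ y ω := by
    intro ω hω
    change _ ≤ ((3 / 4 : ℝ) ^ 4) ^ _
    rw [← pow_mul]
    exact pow_le_pow_of_le_one (by norm_num) (by norm_num) (mem_filter.1 hω).2
  refine le_of_mul_le_mul_right ?_ (by positivity : (0 : ℝ) < (3 / 4) ^ #Q)
  calc (#{ω : ι → Bool | 4 * #{q ∈ Q | ω q = β q} ≤ #Q} : ℝ) * (3 / 4) ^ #Q
      ≤ ∑ ω with 4 * #{q ∈ Q | ω q = β q} ≤ #Q, y ω := by
        rw [← nsmul_eq_mul]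
        exact card_nsmul_le_sum _ _ _ hlarge
    _ ≤ ∑ ω, y ω :=
        sum_le_sum_of_subset_of_nonneg (subset_univ _) fun _ _ _ => by positivity
    _ = (337 / 512) ^ #Q * 2 ^ Fintype.card ι := by
        rw [sum_pow_card_filter_eq]
        norm_num
    _ ≤ (9 / 10 * (3 / 4)) ^ #Q * 2 ^ Fintype.card ι := by
        gcongr
        norm_num
    _ = (9 / 10) ^ #Q * 2 ^ Fintype.card ι * (3 / 4) ^ #Q := by
        rw [mul_pow]
        ring

theorem sum_pow_card_nonempty [Fintype α] (x : ℝ) :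
    ∑ A : Finset α with A.Nonempty, x ^ #A = (1 + x) ^ Fintype.card α - 1 := by
  have htotal : ∑ A : Finset α, x ^ #A = (1 + x) ^ Fintype.card α := by
    simpa [add_comm] using Fintype.sum_pow_mul_eq_add_pow α x 1
  have hempty : ({A | ¬ A.Nonempty} : Finset (Finset α)) = {∅} := by
    ext A
    simp
  rw [← htotal, ← sum_filter_add_sum_filter_not univ (fun A : Finset α => A.Nonempty), hempty]
  simp

theorem one_add_pow_lt_two {k : ℕ} {ρ : ℝ} (hρ : 0 ≤ ρ) (hkρ : 4 * k * ρ ≤ 1) :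
    (1 + ρ) ^ k < 2 := calc
  (1 + ρ) ^ k ≤ Real.exp ρ ^ k := by
    gcongr
    linarith [Real.add_one_le_exp ρ]
  _ = Real.exp (k * ρ) := (Real.exp_nat_mul ρ k).symm
  _ ≤ Real.exp (1 / 4) := Real.exp_le_exp.2 (by linarith)
  _ ≤ 1 / (1 - 1 / 4) := Real.exp_bound_div_one_sub_of_interval (by norm_num) (by norm_num)
  _ < 2 := by norm_num

theorem sum_pow_card_mul_pow_card_lt_one [Fintype α] {ρ : ℝ} (hρ : 0 ≤ ρ)
    (hαρ : 4 * Fintype.card α * ρ ≤ 1) {I : Finset (Finset α × Finset α)}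
    (hI : ∀ p ∈ I, p.1.Nonempty ∧ p.2.Nonempty) : ∑ p ∈ I, ρ ^ #p.1 * ρ ^ #p.2 < 1 := by
  let 𝒩 : Finset (Finset α) := {A | A.Nonempty}
  have hsub : I ⊆ 𝒩 ×ˢ 𝒩 := fun p hp => by simpa [𝒩] using hI p hp
  calc ∑ p ∈ I, ρ ^ #p.1 * ρ ^ #p.2
      ≤ ∑ p ∈ 𝒩 ×ˢ 𝒩, ρ ^ #p.1 * ρ ^ #p.2 :=
        sum_le_sum_of_subset_of_nonneg hsub fun _ _ _ => by positivity
    _ = ((1 + ρ) ^ Fintype.card α - 1) ^ 2 := by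
        rw [← sum_pow_card_nonempty, sq, sum_mul_sum, sum_product]
    _ < 1 := by
        have := one_le_pow₀ (n := Fintype.card α) (by linarith : 1 ≤ 1 + ρ)
        have := one_add_pow_lt_two hρ hαρ
        nlinarith

end Counting

section RandomTournament

variable {V : Type*}

/-- The tournament on a linearly ordered set whose edge on `{u, v}` points upwards exactly when
the bit `ω s(u, v)` is set. The values of `ω` on the diagonal of `Sym2 V` are irrelevant. -/
def orientation [LinearOrder V] (ω : Sym2 V → Bool) : Digraph V where
  Adj u v := u ≠ v ∧ ω s(u, v) = decide (u < v)

theorem isTournament_orientation [LinearOrder V] (ω : Sym2 V → Bool) :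
    (orientation ω).IsTournament := by
  refine ⟨fun v h => h.1 rfl, fun u v huv => ?_⟩
  rcases lt_or_gt_of_ne huv with h | h <;>
    simp [orientation, h.ne, h.ne', h, h.not_gt, Sym2.eq_swap (a := v) (b := u)]

open Classical in
/-- Between any two sets of at least `a` vertices the edge density of `T`, in either direction,
is at least `1 / C`. -/
def EdgeDense (T : Digraph V) (a C : ℕ) : Prop :=
  ∀ A B : Finset V, a ≤ #A → a ≤ #B → #A * #B ≤ C * #{p ∈ A ×ˢ B | T.Adj p.1 p.2}

theorem exists_monotone_pairs [LinearOrder V] {A B : Finset V} (hB : 2 ≤ #B) :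
    ∃ (Q : Finset (V × V)) (β : Bool), Q ⊆ A ×ˢ B ∧ #A * #B ≤ 4 * #Q ∧
      ∀ p ∈ Q, p.1 ≠ p.2 ∧ decide (p.1 < p.2) = β := by
  let P : Finset (V × V) := {p ∈ A ×ˢ B | p.1 ≠ p.2}
  have hdiag : #{p ∈ A ×ˢ B | ¬ p.1 ≠ p.2} ≤ #A := by
    refine card_le_card_of_injOn Prod.fst (fun p hp => ?_) fun p hp q hq hpq => ?_
    · exact (mem_product.1 (mem_filter.1 hp).1).1
    · simp only [coe_filter, not_not, Set.mem_ofPred_eq] at hp hq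
      exact Prod.ext hpq (hp.2.symm.trans (hpq.trans hq.2))
  have hAB : 2 * #A ≤ #A * #B := by nlinarith
  have hsplit := card_filter_add_card_filter_not (s := A ×ˢ B) fun p => p.1 ≠ p.2
  have hP := card_filter_add_card_filter_not (s := P) fun p => p.1 < p.2
  rw [card_product] at hsplit
  change #P + _ = _ at hsplit
  obtain ⟨β, hβ⟩ : ∃ β : Bool, #A * #B ≤ 4 * #{p ∈ P | decide (p.1 < p.2) = β} := by
    by_cases hlt : #A * #B ≤ 4 * #{p ∈ P | p.1 < p.2}
    · exact ⟨true, by simpa using hlt⟩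
    · refine ⟨false, ?_⟩
      simp only [decide_eq_false_iff_not]
      omega
  refine ⟨{p ∈ P | decide (p.1 < p.2) = β}, β,
    (filter_subset _ _).trans (filter_subset _ _), hβ, fun p hp => ?_⟩
  obtain ⟨hpP, hpβ⟩ := mem_filter.1 hp
  exact ⟨(mem_filter.1 hpP).2, hpβ⟩

theorem injOn_sym2_mk_of_decide_lt_eq [LinearOrder V] {Q : Set (V × V)} {β : Bool}
    (hQ : ∀ p ∈ Q, p.1 ≠ p.2 ∧ decide (p.1 < p.2) = β) :
    Set.InjOn (fun p : V × V => s(p.1, p.2)) Q := by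
  rintro ⟨u, v⟩ huv ⟨u', v'⟩ huv' heq
  obtain ⟨rfl, rfl⟩ | ⟨rfl, rfl⟩ := Sym2.eq_iff.1 heq
  · rfl
  · obtain ⟨hne, hlt⟩ := hQ _ huv
    have hlt' := (hQ _ huv').2
    rcases lt_or_gt_of_ne hne with h | h <;> simp_all [h.not_gt]

open Classical in
theorem card_orientation_few_edges_le [LinearOrder V] [Fintype V] {A B : Finset V} {e : ℕ}
    (hB : 2 ≤ #B) (he : 4 * e ≤ #A * #B) :
    (#{ω : Sym2 V → Bool | 16 * #{p ∈ A ×ˢ B | (orientation ω).Adj p.1 p.2} < #A * #B} : ℝ) ≤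
      (9 / 10) ^ e * Fintype.card (Sym2 V → Bool) := by
  obtain ⟨Q, β, hQ, hQcard, hQβ⟩ := exists_monotone_pairs (A := A) hB
  let toEdge : V × V → Sym2 V := fun p => s(p.1, p.2)
  have hinj : Set.InjOn toEdge Q := injOn_sym2_mk_of_decide_lt_eq hQβ
  have hcard : #(Q.image toEdge) = #Q := card_image_of_injOn hinj
  have hfew : ∀ ω : Sym2 V → Bool, #{q ∈ Q.image toEdge | ω q = β} ≤
      #{p ∈ A ×ˢ B | (orientation ω).Adj p.1 p.2} := by
    intro ω
    rw [filter_image]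
    refine card_image_le.trans (card_le_card fun p hp => ?_)
    obtain ⟨hpQ, hωp⟩ := mem_filter.1 hp
    exact mem_filter.2 ⟨hQ hpQ, (hQβ p hpQ).1, hωp.trans (hQβ p hpQ).2.symm⟩
  calc (#{ω : Sym2 V → Bool |
        16 * #{p ∈ A ×ˢ B | (orientation ω).Adj p.1 p.2} < #A * #B} : ℝ)
      ≤ #{ω : Sym2 V → Bool | 4 * #{q ∈ Q.image toEdge | ω q = β} ≤ #(Q.image toEdge)} := by
        gcongr with ω
        intro h
        have := hfew ω
        omega
    _ ≤ (9 / 10) ^ #(Q.image toEdge) * 2 ^ Fintype.card (Sym2 V) :=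
        card_four_mul_card_filter_le _ fun _ => β
    _ ≤ (9 / 10) ^ e * 2 ^ Fintype.card (Sym2 V) := by
        refine mul_le_mul_of_nonneg_right ?_ (by positivity)
        exact pow_le_pow_of_le_one (by norm_num) (by norm_num) (by omega)
    _ = (9 / 10) ^ e * Fintype.card (Sym2 V → Bool) := by simp

theorem exists_tournament_edgeDense [Fintype V] {b : ℕ} (hb : 0 < b)
    (hV : 4 * (Fintype.card V : ℝ) ≤ (10 / 9) ^ b) :
    ∃ T : Digraph V, T.IsTournament ∧ EdgeDense T (8 * b) 16 := by
  classical
  let := LinearOrder.lift' _ (Fintype.equivFin V).injective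
  set ρ : ℝ := (9 / 10) ^ b with hρ
  have hVρ : 4 * Fintype.card V * ρ ≤ 1 := calc
    4 * Fintype.card V * ρ ≤ (10 / 9) ^ b * ρ := by gcongr
    _ = 1 := by rw [hρ, ← mul_pow]; norm_num
  let I : Finset (Finset V × Finset V) := {p | 8 * b ≤ #p.1 ∧ 8 * b ≤ #p.2}
  have hsum : ∑ p ∈ I, ρ ^ #p.1 * ρ ^ #p.2 < 1 := by
    refine sum_pow_card_mul_pow_card_lt_one (by positivity) hVρ fun p hp => ?_
    obtain ⟨-, hA, hB⟩ := mem_filter.1 hp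
    exact ⟨card_pos.1 (by omega), card_pos.1 (by omega)⟩
  obtain ⟨ω, hω⟩ : ∃ ω : Sym2 V → Bool, ∀ p ∈ I,
      ¬ 16 * #{q ∈ p.1 ×ˢ p.2 | (orientation ω).Adj q.1 q.2} < #p.1 * #p.2 := by
    refine exists_forall_not_of_sum_lt_one (fun p hp => ?_) hsum
    obtain ⟨-, hA, hB⟩ := mem_filter.1 hp
    rw [hρ, ← pow_add, ← pow_mul]
    exact card_orientation_few_edges_le (by omega) (by nlinarith)
  refine ⟨orientation ω, isTournament_orientation ω, fun A B hA hB => ?_⟩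
  exact not_lt.1 (hω (A, B) (mem_filter.2 ⟨mem_univ _, hA, hB⟩))

end RandomTournament

section BlowUp

variable {V σ ι κ : Type*}

open Classical in
theorem exists_subset_forall_le_card_fiber [Fintype σ] {A : Finset ι} {a : ℕ} (c : ι → σ)
    (hA : 2 * Fintype.card σ * a ≤ #A) : ∃ S : Finset σ,
      (∀ s ∈ S, a ≤ #{x ∈ A | c x = s}) ∧ #A ≤ 2 * ∑ s ∈ S, #{x ∈ A | c x = s} := by
  refine ⟨univ.filter fun s => a ≤ #{x ∈ A | c x = s}, fun s hs => (mem_filter.1 hs).2, ?_⟩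
  have hfibers : #A = ∑ s, #{x ∈ A | c x = s} :=
    card_eq_sum_card_fiberwise fun x _ => mem_coe.2 (mem_univ (c x))
  have hsplit := sum_filter_add_sum_filter_not univ (fun s => a ≤ #{x ∈ A | c x = s})
    fun s => #{x ∈ A | c x = s}
  have hsmall : ∑ s with ¬ a ≤ #{x ∈ A | c x = s}, #{x ∈ A | c x = s} ≤ Fintype.card σ * a := calc
    ∑ s with ¬ a ≤ #{x ∈ A | c x = s}, #{x ∈ A | c x = s}
      ≤ #{s | ¬ a ≤ #{x ∈ A | c x = s}} • a :=
        sum_le_card_nsmul _ _ _ fun s hs => (not_le.1 (mem_filter.1 hs).2).le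
    _ ≤ Fintype.card σ * a := Nat.mul_le_mul_right a (card_le_univ _)
  have : Fintype.card σ * a * 2 ≤ #A := by linarith
  omega

open Classical in
theorem EdgeDense.card_mul_card_le_of_injOn {T : Digraph V} {a C : ℕ} (hT : EdgeDense T a C)
    {A : Finset ι} {B : Finset κ} {φ : ι → V} {ψ : κ → V} (hφ : Set.InjOn φ A)
    (hψ : Set.InjOn ψ B) (hA : a ≤ #A) (hB : a ≤ #B) :
    #A * #B ≤ C * #{p ∈ A ×ˢ B | T.Adj (φ p.1) (ψ p.2)} := by
  rw [← card_image_of_injOn hφ] at hA ⊢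
  rw [← card_image_of_injOn hψ] at hB ⊢
  refine (hT _ _ hA hB).trans (Nat.mul_le_mul_left C ?_)
  rw [← prodMap_image_product, filter_image]
  exact card_image_le

open Classical in
theorem EdgeDense.blowUp [Fintype σ] {T : Digraph V} {a C : ℕ} (hT : EdgeDense T a C) :
    EdgeDense (comapDigraph (Prod.fst : V × σ → V) T) (2 * Fintype.card σ * a) (4 * C) := by
  intro A B hA hB
  obtain ⟨SA, hSA, hcardA⟩ := exists_subset_forall_le_card_fiber Prod.snd hA
  obtain ⟨SB, hSB, hcardB⟩ := exists_subset_forall_le_card_fiber Prod.snd hB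
  let E : Finset ((V × σ) × (V × σ)) := {p ∈ A ×ˢ B | T.Adj p.1.1 p.2.1}
  have hinj : ∀ (D : Finset (V × σ)) (s : σ),
      Set.InjOn Prod.fst (({x ∈ D | x.2 = s} : Finset (V × σ)) : Set (V × σ)) := by
    intro D s x hx y hy hxy
    rw [mem_coe, mem_filter] at hx hy
    exact Prod.ext hxy (hx.2.trans hy.2.symm)
  have hfiber : ∀ q ∈ SA ×ˢ SB, #{x ∈ A | x.2 = q.1} * #{y ∈ B | y.2 = q.2} ≤
      C * #{p ∈ E | (p.1.2, p.2.2) = q} := by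
    intro q hq
    obtain ⟨hs, ht⟩ := mem_product.1 hq
    refine (hT.card_mul_card_le_of_injOn (hinj A q.1) (hinj B q.2) (hSA _ hs) (hSB _ ht)).trans ?_
    gcongr C * #?_
    intro p
    simp only [E, mem_filter, mem_product, Prod.ext_iff]
    tauto
  calc #A * #B
      ≤ (2 * ∑ s ∈ SA, #{x ∈ A | x.2 = s}) * (2 * ∑ t ∈ SB, #{y ∈ B | y.2 = t}) :=
        Nat.mul_le_mul hcardA hcardB
    _ = 4 * ∑ q ∈ SA ×ˢ SB, #{x ∈ A | x.2 = q.1} * #{y ∈ B | y.2 = q.2} := by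
        rw [sum_product, mul_mul_mul_comm, sum_mul_sum]
        rfl
    _ ≤ 4 * ∑ q ∈ SA ×ˢ SB, C * #{p ∈ E | (p.1.2, p.2.2) = q} :=
        Nat.mul_le_mul_left 4 (sum_le_sum hfiber)
    _ = 4 * C * #{p ∈ E | (p.1.2, p.2.2) ∈ SA ×ˢ SB} := by
        rw [← mul_sum, mul_assoc, sum_card_fiberwise_eq_card_filter]
    _ ≤ 4 * C * #E := Nat.mul_le_mul_left _ (card_filter_le _ _)

end BlowUp

section RandomBipartiteDigraph

variable {α κ V W : Type*} [Fintype α] [Fintype κ]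

theorem prod_card_notMem_le [DecidableEq α] [Nonempty α] (S : Finset (α × α)) :
    ∏ x, (#{y | (x, y) ∉ S} : ℝ) ≤
      Fintype.card α ^ Fintype.card α * Real.exp (-(#S / Fintype.card α)) := by
  have hα : (Fintype.card α : ℝ) ≠ 0 := by exact_mod_cast Fintype.card_ne_zero
  have hrow : ∀ x, (#{y | (x, y) ∉ S} : ℝ) ≤
      Fintype.card α * Real.exp (-(#{y | (x, y) ∈ S} / Fintype.card α)) := by
    intro x
    have hsplit : (#{y | (x, y) ∈ S} + #{y | (x, y) ∉ S} : ℝ) = Fintype.card α := by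
      exact_mod_cast card_filter_add_card_filter_not (s := univ) fun y => (x, y) ∈ S
    calc (#{y | (x, y) ∉ S} : ℝ)
        = Fintype.card α * (1 - #{y | (x, y) ∈ S} / Fintype.card α) := by
          field_simp
          linarith
      _ ≤ _ := by
          gcongr
          exact Real.one_sub_le_exp_neg _
  have hsum : ∑ x, (#{y | (x, y) ∈ S} : ℝ) = #S := by
    have : #S = ∑ x, #{y | (x, y) ∈ S} := by
      simp only [card_filter]
      rw [← Fintype.sum_prod_type fun p => if p ∈ S then 1 else 0, ← card_filter,
        filter_univ_mem]
    exact_mod_cast this.symm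
  calc ∏ x, (#{y | (x, y) ∉ S} : ℝ)
      ≤ ∏ x, (Fintype.card α * Real.exp (-(#{y | (x, y) ∈ S} / Fintype.card α)) : ℝ) :=
        prod_le_prod (fun _ _ => Nat.cast_nonneg _) fun x _ => hrow x
    _ = Fintype.card α ^ Fintype.card α * Real.exp (-(#S / Fintype.card α)) := by
        rw [prod_mul_distrib, prod_const, card_univ, ← Real.exp_sum, sum_neg_distrib,
          ← sum_div, hsum]

theorem card_forall_notMem_le [DecidableEq α] [DecidableEq κ] [Nonempty α]
    (S : Finset (α × α)) :
    (#{F : κ → α → α | ∀ l x, (x, F l x) ∉ S} : ℝ) ≤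
      Real.exp (-(Fintype.card κ * (#S / Fintype.card α))) * Fintype.card (κ → α → α) := by
  have hpi : ({F : κ → α → α | ∀ l x, (x, F l x) ∉ S} : Finset (κ → α → α)) =
      Fintype.piFinset fun _ => Fintype.piFinset fun x => {y | (x, y) ∉ S} := by
    ext F
    simp
  calc (#{F : κ → α → α | ∀ l x, (x, F l x) ∉ S} : ℝ)
      = (∏ x, (#{y | (x, y) ∉ S} : ℝ)) ^ Fintype.card κ := by
        rw [hpi, Fintype.card_piFinset, prod_const, card_univ, Fintype.card_piFinset]
        push_cast
        rfl
    _ ≤ (Fintype.card α ^ Fintype.card α * Real.exp (-(#S / Fintype.card α))) ^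
          Fintype.card κ := by
        gcongr
        exact prod_card_notMem_le S
    _ = Real.exp (-(Fintype.card κ * (#S / Fintype.card α))) * Fintype.card (κ → α → α) := by
        rw [mul_pow, ← Real.exp_nat_mul, mul_neg, mul_comm]
        simp

theorem exists_forall_exists_mem [Nonempty α] {𝒮 : Finset (Finset (α × α))} {δ : ℝ}
    (hδ : ∀ S ∈ 𝒮, δ * Fintype.card α ≤ #S) (h𝒮 : #𝒮 < Real.exp (Fintype.card κ * δ)) :
    ∃ F : κ → α → α, ∀ S ∈ 𝒮, ∃ l x, (x, F l x) ∈ S := by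
  classical
  have hα : (0 : ℝ) < Fintype.card α := by exact_mod_cast Fintype.card_pos
  suffices ∃ F : κ → α → α, ∀ S ∈ 𝒮, ¬ ∀ l x, (x, F l x) ∉ S by simpa using this
  refine exists_forall_not_of_sum_lt_one (w := fun _ => Real.exp (-(Fintype.card κ * δ)))
    (fun S hS => (card_forall_notMem_le S).trans ?_) ?_
  · gcongr
    exact (le_div_iff₀ hα).2 (hδ S hS)
  · rwa [sum_const, nsmul_eq_mul, Real.exp_neg, ← div_eq_mul_inv, div_lt_one (Real.exp_pos _)]

open Classical in
theorem exists_functions_hitting_dense_pairs [Nonempty α] [Fintype V] (T : Digraph V)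
    (hκ : 2 * Fintype.card V < Real.exp (Fintype.card κ / 2304)) :
    ∃ F : κ → α → α, ∀ (X Y : Finset α) (φ ψ : α → V),
      Fintype.card α ^ 2 ≤ 1152 * #{p ∈ X ×ˢ Y | T.Adj (φ p.1) (ψ p.2)} →
        ∃ l, ∃ x ∈ X, F l x ∈ Y ∧ T.Adj (φ x) (ψ (F l x)) := by
  set n := Fintype.card α with hn
  let edges : (Finset α × Finset α) × (α → V) × (α → V) → Finset (α × α) :=
    fun q => {p ∈ q.1.1 ×ˢ q.1.2 | T.Adj (q.2.1 p.1) (q.2.2 p.2)}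
  let 𝒮 := {S ∈ univ.image edges | n ^ 2 ≤ 1152 * #S}
  have h𝒮 : (#𝒮 : ℝ) < Real.exp (Fintype.card κ * (n / 1152)) := calc
    (#𝒮 : ℝ) ≤ Fintype.card ((Finset α × Finset α) × (α → V) × (α → V)) := by
      exact_mod_cast (card_filter_le _ _).trans card_image_le
    _ = (2 * Fintype.card V) ^ (2 * n) := by
      simp only [Fintype.card_prod, Fintype.card_finset, Fintype.card_fun]
      push_cast
      ring
    _ < Real.exp (Fintype.card κ / 2304) ^ (2 * n) :=
      pow_lt_pow_left₀ hκ (by positivity) (by simp [hn])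
    _ = Real.exp (Fintype.card κ * (n / 1152)) := by
      rw [← Real.exp_nat_mul]
      push_cast
      ring_nf
  have hdense : ∀ S ∈ 𝒮, (n / 1152 : ℝ) * n ≤ #S := by
    intro S hS
    have : (n ^ 2 : ℝ) ≤ 1152 * #S := by exact_mod_cast (mem_filter.1 hS).2
    linarith
  obtain ⟨F, hF⟩ := exists_forall_exists_mem hdense h𝒮
  refine ⟨F, fun X Y φ ψ hXY => ?_⟩
  obtain ⟨l, x, hlx⟩ := hF (edges ((X, Y), φ, ψ))
    (mem_filter.2 ⟨mem_image_of_mem _ (mem_univ _), hXY⟩)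
  obtain ⟨hmem, hadj⟩ := mem_filter.1 hlx
  exact ⟨l, x, (mem_product.1 hmem).1, (mem_product.1 hmem).2, hadj⟩

open Classical in
/-- The edge relation of the bipartite digraph in which `x` is joined to `F l x` for every `l`,
after deleting all edges into vertices that are hit more than `q` times by the functions `F l`. -/
def PrunedAdj (F : κ → α → α) (q : ℕ) (x y : α) : Prop :=
  (∃ l, F l x = y) ∧ #{p : κ × α | F p.1 p.2 = y} ≤ q

theorem ncard_prunedAdj_right_le (F : κ → α → α) (q : ℕ) (x : α) :
    {y | PrunedAdj F q x y}.ncard ≤ Fintype.card κ := by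
  have hsub : {y | PrunedAdj F q x y} ⊆ Set.range fun l => F l x := fun y hy => hy.1
  refine (Set.ncard_le_ncard hsub (Set.finite_range _)).trans ?_
  rw [← Set.image_univ]
  exact (Set.ncard_image_le Set.finite_univ).trans_eq (by simp [Set.ncard_univ])

theorem ncard_prunedAdj_left_le (F : κ → α → α) (q : ℕ) (y : α) :
    {x | PrunedAdj F q x y}.ncard ≤ q := by
  classical
  obtain hempty | ⟨x₀, -, hy⟩ := {x | PrunedAdj F q x y}.eq_empty_or_nonempty
  · simp [hempty]
  have hsub : {x | PrunedAdj F q x y} ⊆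
      ({p : κ × α | F p.1 p.2 = y} : Finset (κ × α)).image Prod.snd := by
    rintro x ⟨⟨l, hl⟩, -⟩
    simpa using ⟨l, hl⟩
  refine (Set.ncard_le_ncard hsub (finite_toSet _)).trans ?_
  rw [Set.ncard_coe_finset]
  exact card_image_le.trans (by convert hy)

theorem mul_card_filter_mul_lt_card_fiber_le [DecidableEq α] (F : κ → α → α) (r : ℕ) :
    r * #{y | r * Fintype.card κ < #{p : κ × α | F p.1 p.2 = y}} ≤ Fintype.card α := by
  let mult : α → ℕ := fun y => #{p : κ × α | F p.1 p.2 = y}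
  let heavy : Finset α := {y | r * Fintype.card κ < mult y}
  have hcount : (r * Fintype.card κ + 1) * #heavy ≤ Fintype.card κ * Fintype.card α := calc
    (r * Fintype.card κ + 1) * #heavy
      = #heavy • (r * Fintype.card κ + 1) := by rw [smul_eq_mul, mul_comm]
    _ ≤ ∑ y ∈ heavy, mult y := card_nsmul_le_sum _ _ _ fun y hy => (mem_filter.1 hy).2
    _ ≤ ∑ y, mult y := sum_le_sum_of_subset (filter_subset _ _)
    _ = Fintype.card κ * Fintype.card α := by
      rw [← Fintype.card_prod]
      exact (card_eq_sum_card_fiberwise fun p _ => mem_coe.2 (mem_univ (F p.1 p.2))).symm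
  change r * #heavy ≤ Fintype.card α
  obtain hκ | hκ := (Fintype.card κ).eq_zero_or_pos
  · have : #heavy ≤ 0 := by simpa [hκ] using hcount
    nlinarith
  · refine Nat.le_of_mul_le_mul_left (hcount.trans' ?_) hκ
    linarith

/-- A set is large if it contains at least a third of all elements. -/
def IsLarge (X : Finset α) : Prop :=
  Fintype.card α ≤ 3 * #X

/-- No two large sets `X` and `Y` can be placed into `D` by injections, chosen independently for
`X` and `Y`, so that all edges of `B` from `X` to `Y` are mapped to edges of `D`. -/
def LargeUnembeddable (B : α → α → Prop) (D : Digraph W) : Prop :=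
  ∀ X Y : Finset α, IsLarge X → IsLarge Y → ∀ Φ Ψ : α → W, Set.InjOn Φ X → Set.InjOn Ψ Y →
    ∃ x ∈ X, ∃ y ∈ Y, B x y ∧ ¬ D.Adj (Φ x) (Ψ y)

-- Only the classes `π` of the image vertices enter the union bound, so the degree `d` has to
-- compensate for the size of `V`, but not for that of `W`.
theorem exists_largeUnembeddable [Nonempty α] [Fintype V] {T : Digraph V} {D : Digraph W}
    (hD : D.IsTournament) {π : W → V} (hπ : ∀ u v, T.Adj (π u) (π v) → D.Adj u v) {a d : ℕ}
    (hT : EdgeDense (comapDigraph π T) a 64) (ha : 6 * a ≤ Fintype.card α)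
    (hd : 2 * Fintype.card V < Real.exp (d / 2304)) :
    ∃ B : α → α → Prop, (∀ x, {y | B x y}.ncard ≤ 6 * d) ∧ (∀ y, {x | B x y}.ncard ≤ d) ∧
      LargeUnembeddable B D := by
  classical
  obtain ⟨F, hF⟩ := exists_functions_hitting_dense_pairs (α := α) (κ := Fin d) T (by simpa using hd)
  let mult : α → ℕ := fun x => #{p : Fin d × α | F p.1 p.2 = x}
  have hheavy : 6 * #{x | 6 * d < mult x} ≤ Fintype.card α := by
    simpa using mul_card_filter_mul_lt_card_fiber_le F 6
  refine ⟨fun x y => PrunedAdj F (6 * d) y x, ncard_prunedAdj_left_le F (6 * d), fun y => ?_, ?_⟩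
  · simpa using ncard_prunedAdj_right_le F (6 * d) y
  intro X Y hX hY Φ Ψ hΦ hΨ
  unfold IsLarge at hX hY
  let X' := {x ∈ X | mult x ≤ 6 * d}
  have hX' : Fintype.card α ≤ 6 * #X' := by
    have hsplit : #X' + #{x ∈ X | ¬ mult x ≤ 6 * d} = #X := card_filter_add_card_filter_not _
    have hle : #{x ∈ X | ¬ mult x ≤ 6 * d} ≤ #{x | 6 * d < mult x} :=
      card_le_card fun x hx => by simpa using (mem_filter.1 hx).2
    omega
  have hdense := hT.card_mul_card_le_of_injOn hΨ
    (hΦ.mono (coe_subset.2 (filter_subset (fun x => mult x ≤ 6 * d) X)))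
    (by omega) (by omega : a ≤ #X')
  obtain ⟨l, y, hy, hx, hadj⟩ := hF Y X' (π ∘ Ψ) (π ∘ Φ) <| calc
    Fintype.card α ^ 2 ≤ (3 * #Y) * (6 * #X') := sq (Fintype.card α) ▸ Nat.mul_le_mul hY hX'
    _ = 18 * (#Y * #X') := by ring
    _ ≤ 18 * (64 * _) := Nat.mul_le_mul_left 18 hdense
    _ = 1152 * _ := by rw [← mul_assoc]; rfl
  obtain ⟨hxX, hmult⟩ := mem_filter.1 hx
  exact ⟨F l y, hxX, y, hy, ⟨⟨l, rfl⟩, hmult⟩, not_adj_of_adj hD (hπ _ _ hadj)⟩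

end RandomBipartiteDigraph

section LayeredDigraph

variable {α W : Type*}

/-- The graded digraph with layers `{i} × α` for `i < H` in which the edges between any two
consecutive layers form a copy of the bipartite digraph `B`. -/
def layered (H : ℕ) (B : α → α → Prop) : Digraph (Fin H × α) where
  Adj u v := (v.1 : ℕ) = u.1 + 1 ∧ B u.2 v.2

theorem degree_layered_le [Finite α] (H : ℕ) {B : α → α → Prop} {p q : ℕ}
    (hp : ∀ x, {y | B x y}.ncard ≤ p) (hq : ∀ y, {x | B x y}.ncard ≤ q) (v : Fin H × α) :
    (layered H B).degree v ≤ p + q := by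
  refine (Set.ncard_union_le {u | (layered H B).Adj v u} {u | (layered H B).Adj u v}).trans
    (add_le_add ((hp v.2).trans' ?_) ((hq v.2).trans' ?_))
  all_goals
    refine Set.ncard_le_ncard_of_injOn Prod.snd (fun u hu => hu.2) ?_
    rintro u ⟨hu, -⟩ w ⟨hw, -⟩ huw
    exact Prod.ext (Fin.ext (by omega)) huw

theorem card_layer_le {V : Type*} [Finite α] {H : ℕ} (e : V ≃ Fin H × α) (i : ℕ) :
    Nat.card {v | ((e v).1 : ℕ) + 1 = i} ≤ Nat.card α := by
  refine Nat.card_le_card_of_injective (fun v => (e v.1).2) fun u v huv => ?_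
  have hu : ((e u).1 : ℕ) + 1 = i := u.2
  have hv : ((e v).1 : ℕ) + 1 = i := v.2
  exact Subtype.ext (e.injective (Prod.ext (Fin.ext (by omega)) huv))

theorem IsLarge.mono [Fintype α] {X Y : Finset α} (hX : IsLarge X) (hXY : X ⊆ Y) : IsLarge Y :=
  hX.trans (Nat.mul_le_mul_left 3 (card_le_card hXY))

theorem not_isLarge_empty [Fintype α] [Nonempty α] : ¬ IsLarge (∅ : Finset α) := by
  simp [IsLarge]

theorem isLarge_lt_or_eq_or_gt [Fintype α] (p : α → ℕ) (j : ℕ) :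
    IsLarge {x | p x < j} ∨ IsLarge {x | p x = j} ∨ IsLarge {x | j < p x} := by
  classical
  have hcover : univ = univ.filter (p · < j) ∪ (univ.filter (p · = j) ∪ univ.filter (j < p ·)) := by
    ext x
    simpa using lt_trichotomy (p x) j
  have hcard : Fintype.card α ≤ #{x | p x < j} + (#{x | p x = j} + #{x | j < p x}) := by
    exact (card_le_card hcover.le).trans <| (card_union_le _ _).trans <|
      Nat.add_le_add_left (card_union_le _ _) _
  unfold IsLarge
  omega

theorem isLarge_gt_of_not_isLarge_lt [Fintype α] {p q : α → ℕ} {j : ℕ}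
    (hp : ¬ IsLarge {x | p x < j})
    (hlt : ∀ i, IsLarge {x | i ≤ p x} → ¬ IsLarge {x | q x < i})
    (heq : IsLarge {x | p x = j} → ¬ IsLarge {x | q x = j}) : IsLarge {x | j < q x} := by
  have hp' := (isLarge_lt_or_eq_or_gt p j).resolve_left hp
  have hq : ¬ IsLarge {x | q x < j} := by
    refine hlt j ?_
    obtain h | h := hp'
    exacts [h.mono (monotone_filter_right _ fun _ _ h => h.ge),
      h.mono (monotone_filter_right _ fun _ _ h => h.le)]
  refine ((isLarge_lt_or_eq_or_gt q j).resolve_left hq).resolve_left fun hqj => ?_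
  obtain h | h := hp'
  · exact heq h hqj
  · exact hlt (j + 1) h (hqj.mono (monotone_filter_right _ fun _ _ h => Nat.lt_succ_of_le h.le))

-- Two consecutive layers cannot both have a large part in the same block, so a large part advances
-- by at least one block every two layers.
theorem isLarge_lt_of_odd_layer [Fintype α] [Nonempty α] {H : ℕ} {p : Fin H → α → ℕ}
    (hlt : ∀ i i' : Fin H, (i' : ℕ) = i + 1 → ∀ j,
      IsLarge {x | j ≤ p i x} → ¬ IsLarge {x | p i' x < j})
    (heq : ∀ i i' : Fin H, (i' : ℕ) = i + 1 → ∀ j,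
      IsLarge {x | p i x = j} → ¬ IsLarge {x | p i' x = j}) :
    ∀ (j : ℕ) (hj : 2 * j + 1 < H), IsLarge {x | j < p ⟨2 * j + 1, hj⟩ x} := by
  have hstep : ∀ (j : ℕ) (hj : 2 * j + 1 < H), ¬ IsLarge {x | p ⟨2 * j, by omega⟩ x < j} →
      IsLarge {x | j < p ⟨2 * j + 1, hj⟩ x} := fun j hj hp =>
    isLarge_gt_of_not_isLarge_lt hp (hlt _ _ rfl) (heq _ _ rfl j)
  intro j
  induction j with
  | zero =>
    refine fun hj => hstep 0 hj ?_
    simpa using not_isLarge_empty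
  | succ j ih => exact fun hj => hstep (j + 1) hj (hlt ⟨2 * j + 1, by omega⟩ _ rfl _ (ih _))

theorem LargeUnembeddable.exists_edge [Fintype α] {B : α → α → Prop} {D : Digraph W}
    (hB : LargeUnembeddable B D) (ι : α ↪ W) {X Y : Finset α} (hX : IsLarge X) (hY : IsLarge Y) :
    ∃ x ∈ X, ∃ y ∈ Y, B x y := by
  obtain ⟨x, hx, y, hy, hxy, -⟩ := hB X Y hX hY ι ι ι.injective.injOn ι.injective.injOn
  exact ⟨x, hx, y, hy, hxy⟩

theorem not_containsCopy_layered [Fintype α] [Nonempty α] {B : α → α → Prop}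
    {D : Digraph W} (hB : LargeUnembeddable B D) (ι : α ↪ W) {m H : ℕ} (hm : 0 < m)
    (hH : 2 * m ≤ H) :
    ¬ (lexProduct (transitiveTournament (Fin m)) D).ContainsCopy (layered H B) := by
  rintro ⟨φ, hφ, hadj⟩
  let p : Fin H → α → ℕ := fun i x => (φ (i, x)).1
  have hedge : ∀ i i' : Fin H, (i' : ℕ) = i + 1 → ∀ x y, B x y →
      p i x < p i' y ∨ p i x = p i' y ∧ D.Adj (φ (i, x)).2 (φ (i', y)).2 := by
    intro i i' hi x y hxy
    exact (hadj (i, x) (i', y) ⟨hi, hxy⟩).imp_right (And.imp_left (congrArg Fin.val))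
  have hlt : ∀ i i' : Fin H, (i' : ℕ) = i + 1 → ∀ j,
      IsLarge {x | j ≤ p i x} → ¬ IsLarge {x | p i' x < j} := by
    intro i i' hi j hX hY
    obtain ⟨x, hx, y, hy, hxy⟩ := hB.exists_edge ι hX hY
    have hxj := (mem_filter.1 hx).2
    have hyj := (mem_filter.1 hy).2
    have := hedge i i' hi x y hxy
    omega
  have hinj : ∀ i j, Set.InjOn (fun x => (φ (i, x)).2) ({x | p i x = j} : Finset α) := by
    intro i j x hx y hy hxy
    rw [mem_coe, mem_filter] at hx hy
    exact congrArg Prod.snd (hφ (Prod.ext (Fin.ext (hx.2.trans hy.2.symm)) hxy))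
  have heq : ∀ i i' : Fin H, (i' : ℕ) = i + 1 → ∀ j,
      IsLarge {x | p i x = j} → ¬ IsLarge {x | p i' x = j} := by
    intro i i' hi j hX hY
    obtain ⟨x, hx, y, hy, hxy, hD⟩ := hB _ _ hX hY _ _ (hinj i j) (hinj i' j)
    have hxj := (mem_filter.1 hx).2
    have hyj := (mem_filter.1 hy).2
    obtain h | ⟨-, h⟩ := hedge i i' hi x y hxy
    exacts [(hxj.trans hyj.symm).not_lt h, hD h]
  have hlast := isLarge_lt_of_odd_layer hlt heq (m - 1) (by omega)
  refine not_isLarge_empty (hlast.mono fun x hx => absurd (mem_filter.1 hx).2 ?_)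
  exact (Nat.le_sub_one_of_lt (φ _).1.isLt).not_gt

end LayeredDigraph

section Parameters

theorem exists_layered_lt_orientedRamsey {α : Type*} [Fintype α] [Nonempty α] {k b s d m H : ℕ}
    (hb : 0 < b) (hk : 4 * (k : ℝ) ≤ (10 / 9) ^ b) (hd : 2 * k < Real.exp (d / 2304))
    (hsb : 96 * b * s ≤ Fintype.card α) (hks : Fintype.card α ≤ k * s) (hm : 0 < m)
    (hH : 2 * m ≤ H) : ∃ B : α → α → Prop,
      (∀ v, (layered H B).degree v ≤ 7 * d) ∧ m * (k * s) < orientedRamsey (layered H B) := by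
  obtain ⟨T, hT, hdense⟩ := exists_tournament_edgeDense (V := Fin k) hb (by simpa using hk)
  let D := lexProduct T (transitiveTournament (Fin s))
  have hD : D.IsTournament := isTournament_lexProduct hT isTournament_transitiveTournament
  obtain ⟨B, hout, hin, hB⟩ := exists_largeUnembeddable (α := α) hD (fun _ _ => Or.inl)
    (hdense.blowUp (σ := Fin s)) (by rw [Fintype.card_fin]; linarith) (by simpa using hd)
  refine ⟨B, fun v => (degree_layered_le H hout hin v).trans (by omega), ?_⟩
  obtain ⟨ι⟩ : Nonempty (α ↪ Fin k × Fin s) :=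
    Function.Embedding.nonempty_of_card_le (by simpa using hks)
  have hlt := card_lt_orientedRamsey (f := fun v => v.1) (fun u v huv => by have := huv.1; omega)
    (isTournament_lexProduct isTournament_transitiveTournament hD)
    (not_containsCopy_layered hB ι hm hH)
  simpa using hlt

theorem mul_succ_le_two_pow {g : ℕ} (hg : 20 ≤ g) : 16128 * (g + 1) ≤ 2 ^ g := by
  induction g, hg using Nat.le_induction with
  | base => norm_num
  | succ g hg ih =>
    rw [pow_succ]
    omega

theorem four_pow_succ_le (g : ℕ) : (4 : ℝ) * 4 ^ g ≤ (10 / 9) ^ (14 * (g + 1)) := by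
  rw [← pow_succ', pow_mul]
  exact pow_le_pow_left₀ (by norm_num) (by norm_num) _

theorem two_mul_four_pow_lt_exp (g : ℕ) : (2 : ℝ) * 4 ^ g < Real.exp (2 * g + 1) := calc
  (2 : ℝ) * 4 ^ g = 2 ^ (2 * g + 1) := by
    rw [pow_succ', pow_mul]
    norm_num
  _ < Real.exp 1 ^ (2 * g + 1) :=
    pow_lt_pow_left₀ (by linarith [Real.exp_one_gt_d9]) zero_le_two (Nat.succ_ne_zero _)
  _ = Real.exp (2 * g + 1) := by
    rw [← Real.exp_nat_mul]
    push_cast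
    rw [mul_one]

theorem exists_layered_two_pow_mul_lt_orientedRamsey {g n H : ℕ} (hg : 20 ≤ g)
    (hn : 1344 * (g + 1) ≤ n) (hH : 2 ≤ H) : ∃ B : Fin n → Fin n → Prop,
      (∀ v, (layered H B).degree v ≤ 16128 * (2 * g + 1)) ∧
        2 ^ (g + 1) * H * n < orientedRamsey (layered H B) := by
  let s := n / (96 * (14 * (g + 1)))
  have hpow := mul_succ_le_two_pow hg
  have hs : 96 * (14 * (g + 1)) * s ≤ n := Nat.mul_div_le n _
  have hns : n ≤ 2688 * (g + 1) * s := by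
    have hs_pos : 0 < s := Nat.div_pos (by omega) (by omega)
    have := Nat.lt_mul_div_succ n (by omega : 0 < 96 * (14 * (g + 1)))
    change n < 96 * (14 * (g + 1)) * (s + 1) at this
    nlinarith
  have hfour : 4 ^ g = 2 ^ g * 2 ^ g := by norm_num [← mul_pow]
  have hks : n ≤ 4 ^ g * s := hns.trans <| Nat.mul_le_mul_right s <| by
    rw [hfour]
    nlinarith
  have : Nonempty (Fin n) := ⟨⟨0, by omega⟩⟩
  obtain ⟨B, hdeg, hB⟩ := exists_layered_lt_orientedRamsey (α := Fin n) (k := 4 ^ g)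
    (d := 2304 * (2 * g + 1)) (m := H / 2) (H := H) (by omega : 0 < 14 * (g + 1))
    (by exact_mod_cast four_pow_succ_le g)
    (by push_cast; simpa [mul_div_cancel_left₀] using two_mul_four_pow_lt_exp g)
    (by simpa using hs) (by simpa using hks) (by omega) (by omega)
  refine ⟨B, fun v => (hdeg v).trans_eq (by ring), hB.trans_le' ?_⟩
  calc 2 ^ (g + 1) * H * n
      ≤ 2 ^ (g + 1) * (3 * (H / 2)) * (2688 * (g + 1) * s) := by
        gcongr
        omega
    _ = H / 2 * (2 ^ g * (16128 * (g + 1)) * s) := by ring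
    _ ≤ H / 2 * (4 ^ g * s) := by
        rw [hfour]
        gcongr

theorem exists_one_lt_forall_pow_le_two_pow {r : ℕ} (hr : 0 < r) :
    ∃ c : ℝ, 1 < c ∧ ∀ Δ : ℕ, c ^ Δ ≤ 2 ^ (Δ / r + 1) := by
  let c : ℝ := 2 ^ (r : ℝ)⁻¹
  have hc : 1 < c := Real.one_lt_rpow one_lt_two (by positivity)
  refine ⟨c, hc, fun Δ => ?_⟩
  calc c ^ Δ
      ≤ c ^ (r * (Δ / r + 1)) := pow_le_pow_right₀ hc.le (Nat.lt_mul_div_succ Δ hr).le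
    _ = 2 ^ (Δ / r + 1) := by rw [pow_mul, Real.rpow_inv_natCast_pow zero_le_two hr.ne']

end Parameters

/-- There are constants `c > 1` and `Δ₀` such that for all `Δ ≥ Δ₀`,
`n ≥ Δ` and `H ≥ 2` there is a graded digraph `G` of maximum degree at most `Δ`, with a
graded partition into `H` parts each of size at most `n` (the part of `v` being `f v`),
whose oriented Ramsey number exceeds `c^Δ · H · n`; in particular it exceeds
`c^Δ · |V(G)|`. -/
theorem graded_oriented_ramsey_lower :
    ∃ c : ℝ, 1 < c ∧ ∃ Δ₀ : ℕ, ∀ Δ : ℕ, Δ₀ ≤ Δ → ∀ n : ℕ, Δ ≤ n → ∀ H : ℕ, 2 ≤ H →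
      ∃ (M : ℕ) (G : Digraph (Fin M)) (f : Fin M → ℕ),
        (∀ v : Fin M, 1 ≤ f v ∧ f v ≤ H) ∧
        (∀ u v : Fin M, G.Adj u v → f v = f u + 1) ∧
        (∀ i : ℕ, 1 ≤ i → i ≤ H → Nat.card {v : Fin M | f v = i} ≤ n) ∧
        (∀ v : Fin M, G.degree v ≤ Δ) ∧
        c ^ Δ * H * n < (orientedRamsey G : ℝ) ∧
        c ^ Δ * M < (orientedRamsey G : ℝ) := by
  obtain ⟨c, hc, hpow⟩ := exists_one_lt_forall_pow_le_two_pow (r := 40000) (by norm_num)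
  refine ⟨c, hc, 800000, fun Δ hΔ n hn H hH => ?_⟩
  obtain ⟨B, hdeg, hB⟩ := exists_layered_two_pow_mul_lt_orientedRamsey
    (by omega : 20 ≤ Δ / 40000) (by omega : _ ≤ n) hH
  have hlt : c ^ Δ * H * n < orientedRamsey (layered H B) := calc
    c ^ Δ * H * n ≤ 2 ^ (Δ / 40000 + 1) * H * n := by
      gcongr
      exact hpow Δ
    _ < orientedRamsey (layered H B) := by exact_mod_cast hB
  let e : Fin (H * n) ≃ Fin H × Fin n := finProdFinEquiv.symm
  rw [← orientedRamsey_comapDigraph_equiv _ e] at hlt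
  refine ⟨H * n, comapDigraph e (layered H B), fun v => (e v).1 + 1, fun v =>
    ⟨Nat.succ_pos _, (e v).1.isLt⟩, fun u v huv => congrArg (· + 1) huv.1, fun i _ _ => ?_,
    fun v => ?_, hlt, ?_⟩
  · simpa using card_layer_le e i
  · rw [degree_comapDigraph_equiv]
    exact (hdeg _).trans (by omega)
  · rwa [Nat.cast_mul, ← mul_assoc]
end
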